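/- arXiv:1405.0120 — 2 statements merged into one kernel-verified Lean document; each statement's English description precedes it below -/
import Mathlib

section
/- Let n ≥ 3, f ∈ C³(ℝⁿ), g ∈ C²(ℝⁿ), F ∈ C²(ℝⁿ × [0,∞)). If u(x,t) = ε V(x,t) + N(F)(x,t) with V and N as in the Agemi–Takamura formula, then u solves ∂ₜ²u − Δu = F − H in ℝⁿ × [0,∞), where H(x,t) = ((n−3)/((n−2)ωₙ)) [ ∫₀ᵗ dτ ∫_{|ω|=1} (∂ₜF)(x+(t−τ)ω,τ) dS_ω + ∫_{|ω|=1} F(x+tω,0) dS_ω + ε ∫_{|ω|=1} (Δf + (n−2) ω·∇g)(x+tω) dS_ω ]. -/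
open MeasureTheory Metric

/-- The surface measure of the unit sphere in `ℝⁿ`. -/
noncomputable def sphereMeasure (n : ℕ) :
    Measure (sphere (0 : EuclideanSpace ℝ (Fin n)) 1) :=
  Measure.toSphere (volume : Measure (EuclideanSpace ℝ (Fin n)))

/-- Total mass `ωₙ` of the unit sphere in `ℝⁿ`. -/
noncomputable def sphereArea (n : ℕ) : ℝ := ((sphereMeasure n) Set.univ).toReal

/-- The Laplacian on `ℝⁿ` as a sum of second partial derivatives. -/
noncomputable def laplacian (n : ℕ) (f : EuclideanSpace ℝ (Fin n) → ℝ)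
    (x : EuclideanSpace ℝ (Fin n)) : ℝ :=
  ∑ i : Fin n,
    fderiv ℝ (fun y => fderiv ℝ f y (EuclideanSpace.single i 1)) x
      (EuclideanSpace.single i 1)

/-- The linear part `V` of the Agemi–Takamura integral equation. -/
noncomputable def linearPart (n : ℕ) (f g : EuclideanSpace ℝ (Fin n) → ℝ)
    (x : EuclideanSpace ℝ (Fin n)) (t : ℝ) : ℝ :=
  (sphereArea n)⁻¹ *
    ∫ ω : sphere (0 : EuclideanSpace ℝ (Fin n)) 1,
      (t * fderiv ℝ f (x + t • (ω : EuclideanSpace ℝ (Fin n)))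
          (ω : EuclideanSpace ℝ (Fin n)) / ((n : ℝ) - 2)
        + f (x + t • (ω : EuclideanSpace ℝ (Fin n)))
        + t * g (x + t • (ω : EuclideanSpace ℝ (Fin n))))
      ∂(sphereMeasure n)

/-- The Duhamel-type integral operator `N`. -/
noncomputable def duhamelOp (n : ℕ) (F : EuclideanSpace ℝ (Fin n) → ℝ → ℝ)
    (x : EuclideanSpace ℝ (Fin n)) (t : ℝ) : ℝ :=
  ((((n : ℝ) - 2) * sphereArea n)⁻¹) *
    ∫ τ in (0 : ℝ)..t, (t - τ) *
      ∫ ω : sphere (0 : EuclideanSpace ℝ (Fin n)) 1,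
        F (x + (t - τ) • (ω : EuclideanSpace ℝ (Fin n))) τ
        ∂(sphereMeasure n)

/-- The correction term `H` in Theorem 1. -/
noncomputable def correctionH (n : ℕ) (ε : ℝ)
    (f g : EuclideanSpace ℝ (Fin n) → ℝ)
    (F : EuclideanSpace ℝ (Fin n) → ℝ → ℝ)
    (x : EuclideanSpace ℝ (Fin n)) (t : ℝ) : ℝ :=
  (((n : ℝ) - 3) / (((n : ℝ) - 2) * sphereArea n)) *
    ((∫ τ in (0 : ℝ)..t,
        ∫ ω : sphere (0 : EuclideanSpace ℝ (Fin n)) 1,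
          deriv (fun s => F (x + (t - τ) • (ω : EuclideanSpace ℝ (Fin n))) s) τ
          ∂(sphereMeasure n))
      + (∫ ω : sphere (0 : EuclideanSpace ℝ (Fin n)) 1,
          F (x + t • (ω : EuclideanSpace ℝ (Fin n))) 0 ∂(sphereMeasure n))
      + ε * ∫ ω : sphere (0 : EuclideanSpace ℝ (Fin n)) 1,
          (laplacian n f (x + t • (ω : EuclideanSpace ℝ (Fin n)))
            + ((n : ℝ) - 2) *
              fderiv ℝ g (x + t • (ω : EuclideanSpace ℝ (Fin n)))
                (ω : EuclideanSpace ℝ (Fin n)))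
          ∂(sphereMeasure n))

/-!
Since the surface measure of the sphere is rotation invariant, the derivative of any function along
the generator `ω ↦ ⟪v, ω⟫ w - ⟪w, ω⟫ v` of a rotation integrates to `0`. Summing such identities
over an orthonormal basis gives the divergence theorem on the sphere, and with it Darboux's equation
`r ∂ᵣ²S + (n - 1) ∂ᵣS = r S(Δφ)` for the spherical integral `S(φ)(r) = ∫ φ(x + rω) dω`, whose
derivative `∂ᵣS` is the flux `∫ ω·∇φ(x + rω) dω`.

By Darboux's equation `t ∂ᵣS + (n - 2) S` has time derivative `t S(Δφ)`. Hence the wave operator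
sends it to `-(n - 3) S(Δφ)`, and sends `t S` to `-(n - 3) ∂ᵣS`; these are the contributions of `f`
and `g`. Duhamel's principle, applied to the waves `r S(F(·, τ))(r)` at `r = t - τ`, produces the
source `ωₙ F` and the error `-(n - 3) ∫₀ᵗ ∂ᵣS(F(·, τ))(t - τ) dτ`. In the latter
`∂ᵣS(F(·, τ))(t - τ) = S(∂ₜF(·, τ))(t - τ) - d/dτ [S(F(·, τ))(t - τ)]`, and the boundary term at
`τ = t` raises the coefficient of `ωₙ F` from `1` to `n - 2`.
-/

lemma integrable_of_continuous_compactSpace {Y G : Type*} [TopologicalSpace Y] [CompactSpace Y]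
    [MeasurableSpace Y] [OpensMeasurableSpace Y] {μ : Measure Y} [IsFiniteMeasure μ]
    [NormedAddCommGroup G] {f : Y → G} (hf : Continuous f) : Integrable f μ :=
  hf.integrable_of_hasCompactSupport (.of_compactSpace f)

section Uncurry

variable {A P G : Type*} [NormedAddCommGroup A] [NormedSpace ℝ A] [NormedAddCommGroup P]
  [NormedSpace ℝ P] [NormedAddCommGroup G] [NormedSpace ℝ G] {Φ : A → P → G}

lemma contDiff_uncurry_left {n : WithTop ℕ∞} (hΦ : ContDiff ℝ n ↿Φ) (a : A) :
    ContDiff ℝ n (Φ a) :=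
  hΦ.comp (by fun_prop : ContDiff ℝ n fun p : P ↦ (a, p))

lemma contDiff_uncurry_right {n : WithTop ℕ∞} (hΦ : ContDiff ℝ n ↿Φ) (p : P) :
    ContDiff ℝ n (Φ · p) :=
  hΦ.comp (by fun_prop : ContDiff ℝ n fun a : A ↦ (a, p))

lemma contDiff_uncurry_swap {n : WithTop ℕ∞} (hΦ : ContDiff ℝ n ↿Φ) :
    ContDiff ℝ n ↿(fun p a ↦ Φ a p) :=
  hΦ.comp (by fun_prop : ContDiff ℝ n fun z : P × A ↦ (z.2, z.1))

lemma contDiff_uncurry_fderiv {m n : WithTop ℕ∞} (hΦ : ContDiff ℝ n ↿Φ) (hmn : m + 1 ≤ n) :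
    ContDiff ℝ m ↿(fun a p ↦ fderiv ℝ (Φ a) p) :=
  ContDiff.fderiv (f := fun z : A × P ↦ Φ z.1)
    (hΦ.comp (by fun_prop : ContDiff ℝ n fun w : (A × P) × P ↦ (w.1.1, w.2))) contDiff_snd hmn

lemma contDiff_uncurry_deriv {Φ : A → ℝ → G} {m n : WithTop ℕ∞} (hΦ : ContDiff ℝ n ↿Φ)
    (hmn : m + 1 ≤ n) : ContDiff ℝ m ↿(fun a t ↦ deriv (Φ a) t) := by
  simp only [← fderiv_apply_one_eq_deriv]
  exact (contDiff_uncurry_fderiv hΦ hmn).clm_apply contDiff_const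

end Uncurry

section ParametricIntegral

variable {Y A P G : Type*} [TopologicalSpace Y] [NormedAddCommGroup A] [NormedSpace ℝ A]
  [NormedAddCommGroup P] [NormedSpace ℝ P] [NormedAddCommGroup G] [NormedSpace ℝ G]

variable {c : Y → A} {Φ : A → P → G}

lemma continuous_fderiv_comp (hc : Continuous c) (hΦ : ContDiff ℝ 1 ↿Φ) :
    Continuous fun z : P × Y ↦ fderiv ℝ (Φ (c z.2)) z.1 :=
  (contDiff_uncurry_fderiv (m := 0) hΦ (by simp)).continuous.comp
    (by fun_prop : Continuous fun z : P × Y ↦ (c z.2, z.1))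

variable [CompactSpace Y] [MeasurableSpace Y] [OpensMeasurableSpace Y] {μ : Measure Y}
  [IsFiniteMeasure μ]

section LocallyCompact

variable [LocallyCompactSpace P]

lemma hasFDerivAt_integral_comp (hc : Continuous c) (hΦ : ContDiff ℝ 1 ↿Φ) (p : P) :
    HasFDerivAt (fun p ↦ ∫ y, Φ (c y) p ∂μ) (∫ y, fderiv ℝ (Φ (c y)) p ∂μ) p := by
  obtain ⟨K, hK, hpK⟩ := exists_compact_mem_nhds p
  have hcont (q : P) : Continuous fun y ↦ Φ (c y) q :=
    hΦ.continuous.comp (by fun_prop : Continuous fun y ↦ (c y, q))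
  have hcont' := continuous_fderiv_comp hc hΦ
  obtain ⟨C, hC⟩ := (hK.prod isCompact_univ).exists_bound_of_continuousOn hcont'.continuousOn
  have hcont'p : Continuous fun y ↦ fderiv ℝ (Φ (c y)) p :=
    hcont'.comp (by fun_prop : Continuous fun y ↦ (p, y))
  exact hasFDerivAt_integral_of_dominated_of_fderiv_le (bound := fun _ ↦ C) hpK
    (.of_forall fun q ↦ (integrable_of_continuous_compactSpace (hcont q)).aestronglyMeasurable)
    (integrable_of_continuous_compactSpace (hcont p))
    (integrable_of_continuous_compactSpace hcont'p).aestronglyMeasurable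
    (.of_forall fun y q hq ↦ hC (q, y) ⟨hq, Set.mem_univ y⟩) (integrable_const C)
    (.of_forall fun y q _ ↦
      ((contDiff_uncurry_left hΦ (c y)).differentiable one_ne_zero q).hasFDerivAt)

lemma fderiv_integral_comp_apply (hc : Continuous c) (hΦ : ContDiff ℝ 1 ↿Φ) (p v : P) :
    fderiv ℝ (fun p ↦ ∫ y, Φ (c y) p ∂μ) p v = ∫ y, fderiv ℝ (Φ (c y)) p v ∂μ := by
  rw [(hasFDerivAt_integral_comp hc hΦ p).fderiv]
  exact ContinuousLinearMap.integral_apply (integrable_of_continuous_compactSpace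
    ((continuous_fderiv_comp hc hΦ).comp (by fun_prop : Continuous fun y ↦ (p, y)))) v

end LocallyCompact

lemma hasDerivAt_integral_comp {Φ : A → ℝ → G} (hc : Continuous c) (hΦ : ContDiff ℝ 1 ↿Φ) (t : ℝ) :
    HasDerivAt (fun t ↦ ∫ y, Φ (c y) t ∂μ) (∫ y, deriv (Φ (c y)) t ∂μ) t := by
  simpa only [← fderiv_apply_one_eq_deriv, fderiv_integral_comp_apply hc hΦ] using
    (hasFDerivAt_integral_comp (μ := μ) hc hΦ t).differentiableAt.hasDerivAt

lemma contDiff_integral_comp [SecondCountableTopologyEither Y G] [FiniteDimensional ℝ P]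
    (hc : Continuous c) {n : ℕ} (hΦ : ContDiff ℝ n ↿Φ) :
    ContDiff ℝ n fun p ↦ ∫ y, Φ (c y) p ∂μ := by
  induction n generalizing Φ with
  | zero =>
    have hcont : Continuous fun z : P × Y ↦ Φ (c z.2) z.1 :=
      hΦ.continuous.comp (by fun_prop : Continuous fun z : P × Y ↦ (c z.2, z.1))
    simpa using continuous_parametric_integral_of_continuous (μ := μ) hcont isCompact_univ
  | succ n ih =>
    have hΦ1 : ContDiff ℝ 1 ↿Φ := hΦ.of_le (by simp)
    refine contDiff_succ_iff_fderiv_apply.2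
      ⟨fun p ↦ (hasFDerivAt_integral_comp hc hΦ1 p).differentiableAt,
        fun h ↦ absurd h (WithTop.natCast_ne_top n), fun v ↦ ?_⟩
    simp only [fun p ↦ fderiv_integral_comp_apply (μ := μ) hc hΦ1 p v]
    exact ih (Φ := fun a p ↦ fderiv ℝ (Φ a) p v)
      ((contDiff_uncurry_fderiv hΦ (by simp)).clm_apply contDiff_const)

end ParametricIntegral

section Laplacian

open InnerProductSpace Laplacian

variable {E G : Type*} [NormedAddCommGroup E] [InnerProductSpace ℝ E]
  [NormedAddCommGroup G] [NormedSpace ℝ G]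

lemma fderiv_fderiv_apply {φ : E → G} (hφ : ContDiff ℝ 2 φ) (v x w : E) :
    fderiv ℝ (fun y ↦ fderiv ℝ φ y v) x w = fderiv ℝ (fderiv ℝ φ) x w v := by
  have hdiff : DifferentiableAt ℝ (fderiv ℝ φ) x :=
    (hφ.fderiv_right (m := 1) (by norm_num)).differentiable one_ne_zero x
  simp [(hdiff.hasFDerivAt.clm_apply (hasFDerivAt_const v x)).fderiv]

lemma fderiv_apply_comm {φ : E → G} (hφ : ContDiff ℝ 2 φ) (v w x : E) :
    fderiv ℝ (fun y ↦ fderiv ℝ φ y v) x w = fderiv ℝ (fun y ↦ fderiv ℝ φ y w) x v := by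
  simpa only [fderiv_fderiv_apply hφ] using (hφ.contDiffAt.isSymmSndFDerivAt (by simp)) w v

variable [FiniteDimensional ℝ E] {ι : Type*} [Fintype ι]

lemma laplacian_eq_sum_fderiv_fderiv (b : OrthonormalBasis ι ℝ E) (φ : E → G) (x : E) :
    Δ φ x = ∑ i, fderiv ℝ (fderiv ℝ φ) x (b i) (b i) := by
  simp [laplacian_eq_iteratedFDeriv_orthonormalBasis φ b, iteratedFDeriv_two_apply]

lemma laplacian_eq_sum_fderiv_apply (b : OrthonormalBasis ι ℝ E) {φ : E → G}
    (hφ : ContDiff ℝ 2 φ) (x : E) :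
    Δ φ x = ∑ i, fderiv ℝ (fun y ↦ fderiv ℝ φ y (b i)) x (b i) := by
  simp only [laplacian_eq_sum_fderiv_fderiv b, fderiv_fderiv_apply hφ]

lemma contDiff_uncurry_laplacian {A : Type*} [NormedAddCommGroup A] [NormedSpace ℝ A]
    {Φ : A → E → G} {m n : WithTop ℕ∞} (hΦ : ContDiff ℝ n ↿Φ) (hmn : m + 2 ≤ n) :
    ContDiff ℝ m ↿(fun a x ↦ Δ (Φ a) x) := by
  let b := stdOrthonormalBasis ℝ E
  simp only [laplacian_eq_sum_fderiv_fderiv b]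
  have hD : ContDiff ℝ m ↿(fun a x ↦ fderiv ℝ (fderiv ℝ (Φ a)) x) :=
    contDiff_uncurry_fderiv (contDiff_uncurry_fderiv (m := m + 1) hΦ
      (by rwa [add_assoc, one_add_one_eq_two])) le_rfl
  exact ContDiff.sum (s := .univ)
    (f := fun i (z : A × E) ↦ fderiv ℝ (fderiv ℝ (Φ z.1)) z.2 (b i) (b i))
    fun i _ ↦ (hD.clm_apply contDiff_const).clm_apply contDiff_const

lemma contDiff_laplacian {φ : E → G} {m n : WithTop ℕ∞} (hφ : ContDiff ℝ n φ) (hmn : m + 2 ≤ n) :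
    ContDiff ℝ m (Δ φ) :=
  contDiff_uncurry_left (contDiff_uncurry_laplacian (Φ := fun _ : ℝ ↦ φ)
    (hφ.comp contDiff_snd) hmn) 0

lemma laplacian_comp_add_right (φ : E → G) (a x : E) : Δ (fun y ↦ φ (y + a)) x = Δ φ (x + a) := by
  simp only [laplacian_eq_iteratedFDeriv_stdOrthonormalBasis, iteratedFDeriv_comp_add_right]

lemma laplacian_fderiv_apply {φ : E → G} (hφ : ContDiff ℝ 3 φ) (v x : E) :
    Δ (fun y ↦ fderiv ℝ φ y v) x = fderiv ℝ (Δ φ) x v := by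
  let b := stdOrthonormalBasis ℝ E
  have hdir (w : E) : ContDiff ℝ 2 fun y ↦ fderiv ℝ φ y w :=
    (hφ.fderiv_right (by norm_num)).clm_apply contDiff_const
  have hdir₂ (i) : DifferentiableAt ℝ (fun y ↦ fderiv ℝ (fun z ↦ fderiv ℝ φ z (b i)) y (b i)) x :=
    ((((hdir (b i)).fderiv_right (m := 1) (by norm_num)).clm_apply contDiff_const).differentiable
      one_ne_zero) x
  have hφ2 : ContDiff ℝ 2 φ := hφ.of_le (by norm_num)
  calc Δ (fun y ↦ fderiv ℝ φ y v) x
      = ∑ i, fderiv ℝ (fun y ↦ fderiv ℝ (fun z ↦ fderiv ℝ φ z v) y (b i)) x (b i) :=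
        laplacian_eq_sum_fderiv_apply b (hdir v) x
    _ = ∑ i, fderiv ℝ (fun y ↦ fderiv ℝ (fun z ↦ fderiv ℝ φ z (b i)) y (b i)) x v := by
        simp only [fun i ↦ fderiv_apply_comm (hdir (b i)) v (b i) x,
          fun i y ↦ fderiv_apply_comm hφ2 v (b i) y]
    _ = fderiv ℝ (Δ φ) x v := by
        rw [funext (laplacian_eq_sum_fderiv_apply b hφ2), fderiv_fun_sum fun i _ ↦ hdir₂ i,
          _root_.sum_apply]

variable {Y A : Type*} [TopologicalSpace Y] [CompactSpace Y] [MeasurableSpace Y]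
  [OpensMeasurableSpace Y] {μ : Measure Y} [IsFiniteMeasure μ] [SecondCountableTopologyEither Y G]
  [NormedAddCommGroup A] [NormedSpace ℝ A] {c : Y → A} {Φ : A → E → G}

lemma laplacian_integral_comp (hc : Continuous c) (hΦ : ContDiff ℝ 2 ↿Φ) (x : E) :
    Δ (fun x ↦ ∫ y, Φ (c y) x ∂μ) x = ∫ y, Δ (Φ (c y)) x ∂μ := by
  let b := stdOrthonormalBasis ℝ E
  have hdir (w : E) : ContDiff ℝ 1 ↿(fun a x ↦ fderiv ℝ (Φ a) x w) :=
    (contDiff_uncurry_fderiv hΦ (by norm_num)).clm_apply contDiff_const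
  have hint (i) : Integrable
      (fun y ↦ fderiv ℝ (fun z ↦ fderiv ℝ (Φ (c y)) z (b i)) x (b i)) μ :=
    integrable_of_continuous_compactSpace
      ((continuous_fderiv_comp hc (hdir (b i))).comp
        (by fun_prop : Continuous fun y ↦ (x, y)) |>.clm_apply continuous_const)
  simp only [laplacian_eq_sum_fderiv_apply b (contDiff_integral_comp (n := 2) (μ := μ) hc hΦ),
    laplacian_eq_sum_fderiv_apply b (contDiff_uncurry_left hΦ _),
    fun x v ↦ fderiv_integral_comp_apply (μ := μ) hc (hΦ.of_le one_le_two) x v,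
    fun w x v ↦ fderiv_integral_comp_apply (μ := μ) hc (hdir w) x v]
  rw [integral_finsetSum _ fun i _ ↦ hint i]

end Laplacian

section Rotations

variable {E : Type*} [NormedAddCommGroup E] [InnerProductSpace ℝ E]
  {G : Type*} [NormedAddCommGroup G] [NormedSpace ℝ G]

open scoped Pointwise RealInnerProductSpace

/-- The homeomorphism of the unit sphere induced by a linear isometry. -/
def sphereHomeomorph (L : E ≃ₗᵢ[ℝ] E) : sphere (0 : E) 1 ≃ₜ sphere (0 : E) 1 :=
  L.toHomeomorph.subtype fun ω ↦ by simp

lemma smul_image_preimage_sphereHomeomorph (L : E ≃ₗᵢ[ℝ] E) (s : Set (sphere (0 : E) 1)) :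
    Set.Ioo (0 : ℝ) 1 • ((↑) '' (sphereHomeomorph L ⁻¹' s) : Set E) =
      L ⁻¹' (Set.Ioo (0 : ℝ) 1 • ((↑) '' s)) := by
  ext y
  simp only [Set.mem_smul, Set.mem_preimage, Set.exists_mem_image]
  constructor
  · rintro ⟨r, hr, ω, hω, rfl⟩
    exact ⟨r, hr, sphereHomeomorph L ω, hω, (map_smul L r (ω : E)).symm⟩
  · rintro ⟨r, hr, ω, hω, hy⟩
    obtain ⟨ω', rfl⟩ := (sphereHomeomorph L).surjective ω
    exact ⟨r, hr, ω', hω, L.injective ((map_smul L r (ω' : E)).trans hy)⟩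

/-- The generator `y ↦ ⟪v, y⟫ w - ⟪w, y⟫ v` of the rotations in the plane spanned by `v, w`. -/
noncomputable def rotationGenerator (v w : E) : E →L[ℝ] E :=
  (innerSL ℝ v).smulRight w - (innerSL ℝ w).smulRight v

lemma rotationGenerator_apply (v w y : E) :
    rotationGenerator v w y = ⟪v, y⟫ • w - ⟪w, y⟫ • v := rfl

lemma hasFDerivAt_inner_smul {h : E → G} (hh : ContDiff ℝ 1 h) (v y : E) :
    HasFDerivAt (fun y ↦ ⟪v, y⟫ • h y)
      (⟪v, y⟫ • fderiv ℝ h y + (innerSL ℝ v).smulRight (h y)) y :=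
  (innerSL ℝ v).hasFDerivAt.smul (hh.differentiable one_ne_zero y).hasFDerivAt

lemma sum_fderiv_inner_smul_rotationGenerator {ι : Type*} [Fintype ι] (b : OrthonormalBasis ι ℝ E)
    {h : E → G} (hh : ContDiff ℝ 1 h) (v : E) {y : E} (hy : ‖y‖ = 1) :
    ∑ i, fderiv ℝ (fun y ↦ ⟪b i, y⟫ • h y) y (rotationGenerator (b i) v y) =
      fderiv ℝ h y v - ⟪v, y⟫ • fderiv ℝ h y y
        - ((Module.finrank ℝ E : ℝ) - 1) • ⟪v, y⟫ • h y := by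
  have hnorm : ∑ i, ⟪b i, y⟫ * ⟪b i, y⟫ = 1 := by
    simpa only [real_inner_comm, real_inner_self_eq_norm_sq, hy, one_pow] using
      b.sum_inner_mul_inner y y
  have hinner : ∑ i, ⟪b i, y⟫ * ⟪b i, v⟫ = ⟪v, y⟫ := by
    simpa only [real_inner_comm] using b.sum_inner_mul_inner y v
  have hfderiv : ∑ i, ⟪b i, y⟫ • fderiv ℝ h y (b i) = fderiv ℝ h y y := by
    simp only [← map_smul, ← map_sum, b.sum_repr' y]
  have hcard : (Fintype.card ι : ℝ) = Module.finrank ℝ E := by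
    rw [Module.finrank_eq_card_basis b.toBasis]
  have hterm (i) : fderiv ℝ (fun y ↦ ⟪b i, y⟫ • h y) y (rotationGenerator (b i) v y) =
      (⟪b i, y⟫ * ⟪b i, y⟫) • fderiv ℝ h y v - ⟪v, y⟫ • ⟪b i, y⟫ • fderiv ℝ h y (b i)
        + (⟪b i, y⟫ * ⟪b i, v⟫) • h y - ⟪v, y⟫ • h y := by
    simp only [(hasFDerivAt_inner_smul hh (b i) y).fderiv, rotationGenerator_apply, add_apply,
      smul_apply, ContinuousLinearMap.smulRight_apply, innerSL_apply_apply, map_sub, map_smul,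
      real_inner_self_eq_norm_sq, b.norm_eq_one]
    module
  simp only [hterm, Finset.sum_sub_distrib, Finset.sum_add_distrib, ← Finset.sum_smul,
    ← Finset.smul_sum, hnorm, hinner, hfderiv, Finset.sum_const, Finset.card_univ,
    ← Nat.cast_smul_eq_nsmul ℝ, hcard]
  module

variable [FiniteDimensional ℝ E]

lemma rotationGenerator_mem_skewAdjoint (v w : E) :
    rotationGenerator v w ∈ skewAdjoint (E →L[ℝ] E) := by
  rw [skewAdjoint.mem_iff, ContinuousLinearMap.star_eq_adjoint, eq_comm,
    ContinuousLinearMap.eq_adjoint_iff]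
  intro x y
  simp only [neg_apply, rotationGenerator_apply, inner_neg_left, inner_sub_left, inner_sub_right,
    real_inner_smul_right, real_inner_comm]
  ring

lemma contDiff_exp_smul (A : E →L[ℝ] E) : ContDiff ℝ 1 fun θ : ℝ ↦ NormedSpace.exp (θ • A) := by
  have hderiv (θ : ℝ) := hasDerivAt_exp_smul_const (𝕂 := ℝ) A θ
  refine contDiff_one_iff_deriv.2 ⟨fun θ ↦ (hderiv θ).differentiableAt, ?_⟩
  rw [funext fun θ ↦ (hderiv θ).deriv]
  exact (continuous_iff_continuousAt.2 fun θ ↦ (hderiv θ).continuousAt).mul continuous_const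

lemma hasDerivAt_exp_smul_apply_zero (A : E →L[ℝ] E) (y : E) :
    HasDerivAt (fun θ : ℝ ↦ NormedSpace.exp (θ • A) y) (A y) 0 := by
  simpa using (hasDerivAt_exp_smul_const (𝕂 := ℝ) A 0).clm_apply (hasDerivAt_const (0 : ℝ) y)

end Rotations

section Sphere

variable {E : Type*} [NormedAddCommGroup E] [InnerProductSpace ℝ E] [FiniteDimensional ℝ E]
  [MeasurableSpace E] [BorelSpace E] {G : Type*} [NormedAddCommGroup G]

open scoped RealInnerProductSpace

lemma integrable_comp_sphere {h : E → G} (hh : Continuous h) :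
    Integrable (fun ω : sphere (0 : E) 1 ↦ h ω) (volume : Measure E).toSphere :=
  integrable_of_continuous_compactSpace (by fun_prop)

variable [NormedSpace ℝ G]

lemma measurePreserving_sphereHomeomorph (L : E ≃ₗᵢ[ℝ] E) :
    MeasurePreserving (sphereHomeomorph L) (volume : Measure E).toSphere
      (volume : Measure E).toSphere := by
  refine ⟨(sphereHomeomorph L).measurable, Measure.ext fun s hs ↦ ?_⟩
  rw [Measure.map_apply (sphereHomeomorph L).measurable hs, Measure.toSphere_apply' _ hs,
    Measure.toSphere_apply' _ ((sphereHomeomorph L).measurable hs),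
    smul_image_preimage_sphereHomeomorph]
  exact congrArg _ (L.measurePreserving.measure_preimage_equiv (f := L.toMeasurableEquiv) _)

lemma integral_sphere_comp_linearIsometryEquiv (L : E ≃ₗᵢ[ℝ] E) (h : E → G) :
    ∫ ω : sphere (0 : E) 1, h (L ω) ∂(volume : Measure E).toSphere =
      ∫ ω : sphere (0 : E) 1, h ω ∂(volume : Measure E).toSphere :=
  (measurePreserving_sphereHomeomorph L).integral_comp (sphereHomeomorph L).measurableEmbedding
    fun ω ↦ h ω

lemma integral_sphere_comp_exp_smul {A : E →L[ℝ] E} (hA : A ∈ skewAdjoint (E →L[ℝ] E)) (h : E → G)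
    (θ : ℝ) :
    ∫ ω : sphere (0 : E) 1, h (NormedSpace.exp (θ • A) ω) ∂(volume : Measure E).toSphere =
      ∫ ω : sphere (0 : E) 1, h ω ∂(volume : Measure E).toSphere := by
  let _ : NormedAlgebra ℚ (E →L[ℝ] E) := NormedAlgebra.restrictScalars ℚ ℝ _
  have hunitary : NormedSpace.exp (θ • A) ∈ unitary (E →L[ℝ] E) :=
    NormedSpace.exp_mem_unitary_of_mem_skewAdjoint (skewAdjoint.smul_mem θ hA)
  exact integral_sphere_comp_linearIsometryEquiv (Unitary.linearIsometryEquiv ⟨_, hunitary⟩) h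

-- Rotation invariance under `exp (θ • A)`, differentiated at `θ = 0`.
lemma integral_sphere_fderiv_skewAdjoint {A : E →L[ℝ] E} (hA : A ∈ skewAdjoint (E →L[ℝ] E))
    {h : E → G} (hh : ContDiff ℝ 1 h) :
    ∫ ω : sphere (0 : E) 1, fderiv ℝ h ω (A ω) ∂(volume : Measure E).toSphere = 0 := by
  have hsmooth : ContDiff ℝ 1 ↿(fun (y : E) (θ : ℝ) ↦ h (NormedSpace.exp (θ • A) y)) :=
    hh.comp (((contDiff_exp_smul A).comp contDiff_snd).clm_apply contDiff_fst)
  have hderiv := hasDerivAt_integral_comp (μ := (volume : Measure E).toSphere)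
    (c := ((↑) : sphere (0 : E) 1 → E)) (by fun_prop) hsmooth 0
  simp only [integral_sphere_comp_exp_smul hA h] at hderiv
  rw [← hderiv.unique (hasDerivAt_const _ _)]
  refine integral_congr_ae (.of_forall fun ω ↦ ?_)
  have hhω : HasFDerivAt h (fderiv ℝ h ω) (NormedSpace.exp ((0 : ℝ) • A) (ω : E)) := by
    simpa using (hh.differentiable one_ne_zero (ω : E)).hasFDerivAt
  exact (hhω.comp_hasDerivAt 0 (hasDerivAt_exp_smul_apply_zero A ω)).deriv.symm

lemma integral_sphere_fderiv_sub_normal {h : E → G} (hh : ContDiff ℝ 1 h) (v : E) :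
    ∫ ω : sphere (0 : E) 1, (fderiv ℝ h ω v - ⟪v, (ω : E)⟫ • fderiv ℝ h ω ω)
        ∂(volume : Measure E).toSphere =
      ((Module.finrank ℝ E : ℝ) - 1) • ∫ ω : sphere (0 : E) 1, ⟪v, (ω : E)⟫ • h ω
        ∂(volume : Measure E).toSphere := by
  let b := stdOrthonormalBasis ℝ E
  have hsmooth (i) : ContDiff ℝ 1 fun y ↦ ⟪b i, y⟫ • h y :=
    (innerSL ℝ (b i)).contDiff.smul hh
  have hint (i) : Integrable (fun ω : sphere (0 : E) 1 ↦
      fderiv ℝ (fun y ↦ ⟪b i, y⟫ • h y) ω (rotationGenerator (b i) v ω))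
      (volume : Measure E).toSphere :=
    integrable_comp_sphere (h := fun y ↦ fderiv ℝ (fun y ↦ ⟪b i, y⟫ • h y) y
      (rotationGenerator (b i) v y))
      (((hsmooth i).continuous_fderiv one_ne_zero).clm_apply (by fun_prop))
  rw [← sub_eq_zero, ← integral_smul, ← integral_sub
    (integrable_comp_sphere (h := fun y ↦ fderiv ℝ h y v - ⟪v, y⟫ • fderiv ℝ h y y) (by fun_prop))
    (integrable_comp_sphere (h := fun y ↦ ((Module.finrank ℝ E : ℝ) - 1) • ⟪v, y⟫ • h y)
      (by fun_prop))]
  simp only [← sum_fderiv_inner_smul_rotationGenerator b hh v (norm_eq_of_mem_sphere _)]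
  rw [integral_finsetSum _ fun i _ ↦ hint i]
  exact Finset.sum_eq_zero fun i _ ↦
    integral_sphere_fderiv_skewAdjoint (rotationGenerator_mem_skewAdjoint (b i) v) (hsmooth i)

/-- The divergence theorem on the unit sphere for a field `X` of covectors, whose tangential
divergence is the integrand on the left. -/
lemma integral_sphere_divergence {ι : Type*} [Fintype ι] (b : OrthonormalBasis ι ℝ E)
    {X : E → E →L[ℝ] G} (hX : ContDiff ℝ 1 X) :
    ∫ ω : sphere (0 : E) 1, (∑ i, fderiv ℝ X ω (b i) (b i) - fderiv ℝ X ω ω ω)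
        ∂(volume : Measure E).toSphere =
      ((Module.finrank ℝ E : ℝ) - 1) • ∫ ω : sphere (0 : E) 1, X ω ω
        ∂(volume : Measure E).toSphere := by
  have hcoord (i) : ContDiff ℝ 1 fun y ↦ X y (b i) := by fun_prop
  have hfderiv_coord (i) (y w : E) : fderiv ℝ (fun y ↦ X y (b i)) y w = fderiv ℝ X y w (b i) := by
    simp [((hX.differentiable one_ne_zero y).hasFDerivAt.clm_apply
      (hasFDerivAt_const (b i) y)).fderiv]
  have hnormal (L : E →L[ℝ] G) (y : E) : ∑ i, ⟪b i, y⟫ • L (b i) = L y := by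
    simp only [← map_smul, ← map_sum, b.sum_repr' y]
  have hsplit (y : E) : ∑ i, fderiv ℝ X y (b i) (b i) - fderiv ℝ X y y y =
      ∑ i, (fderiv ℝ (fun y ↦ X y (b i)) y (b i)
        - ⟪b i, y⟫ • fderiv ℝ (fun y ↦ X y (b i)) y y) := by
    simp only [hfderiv_coord, Finset.sum_sub_distrib, hnormal]
  simp only [hsplit]
  rw [show (fun ω : sphere (0 : E) 1 ↦ X ω ω) = fun ω : sphere (0 : E) 1 ↦
    ∑ i, ⟪b i, (ω : E)⟫ • X ω (b i) from funext fun ω ↦ (hnormal (X ω) ω).symm]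
  rw [integral_finsetSum, integral_finsetSum, Finset.smul_sum]
  · exact Finset.sum_congr rfl fun i _ ↦ integral_sphere_fderiv_sub_normal (hcoord i) (b i)
  · exact fun i _ ↦ integrable_comp_sphere (h := fun y ↦ ⟪b i, y⟫ • X y (b i)) (by fun_prop)
  · intro i _
    simp only [hfderiv_coord]
    exact integrable_comp_sphere
      (h := fun y ↦ fderiv ℝ X y (b i) (b i) - ⟪b i, y⟫ • fderiv ℝ X y y (b i)) (by fun_prop)

end Sphere

lemma hasDerivAt_comp_add_smul {E G : Type*} [NormedAddCommGroup E] [NormedSpace ℝ E]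
    [NormedAddCommGroup G] [NormedSpace ℝ G] {φ : E → G} (hφ : ContDiff ℝ 1 φ) (x v : E) (r : ℝ) :
    HasDerivAt (fun r : ℝ ↦ φ (x + r • v)) (fderiv ℝ φ (x + r • v) v) r := by
  have hline : HasDerivAt (fun r : ℝ ↦ x + r • v) v r := by
    simpa using ((hasDerivAt_id r).smul_const v).const_add x
  exact (hφ.differentiable one_ne_zero (x + r • v)).hasFDerivAt.comp_hasDerivAt r hline

section SphericalIntegral

open Laplacian

variable {E : Type*} [NormedAddCommGroup E] [InnerProductSpace ℝ E] [FiniteDimensional ℝ E]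
  [MeasurableSpace E] [BorelSpace E] {G : Type*} [NormedAddCommGroup G] [NormedSpace ℝ G]

/-- The integral of `φ` over the sphere of centre `x` and radius `r`, against the surface measure of
the unit sphere. It is not normalised and carries no factor `r ^ (d - 1)`; `r` may have any sign. -/
noncomputable def sphericalIntegral (φ : E → G) (x : E) (r : ℝ) : G :=
  ∫ ω : sphere (0 : E) 1, φ (x + r • ω) ∂(volume : Measure E).toSphere

/-- The integral of the normal derivative of `φ` over the sphere of centre `x` and radius `r`, with
the conventions of `sphericalIntegral`. -/
noncomputable def sphericalFlux (φ : E → G) (x : E) (r : ℝ) : G :=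
  ∫ ω : sphere (0 : E) 1, fderiv ℝ φ (x + r • ω) ω ∂(volume : Measure E).toSphere

section Smoothness

variable {P : Type*} [NormedAddCommGroup P] [NormedSpace ℝ P] [FiniteDimensional ℝ P] {k : ℕ}
  {φ : P → E → G} {x : P → E} {r : P → ℝ}

lemma contDiff_sphericalIntegral (hφ : ContDiff ℝ k ↿φ) (hx : ContDiff ℝ k x)
    (hr : ContDiff ℝ k r) : ContDiff ℝ k fun p ↦ sphericalIntegral (φ p) (x p) (r p) :=
  contDiff_integral_comp (Φ := fun (ω : E) p ↦ φ p (x p + r p • ω)) continuous_subtype_val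
    (hφ.comp (by fun_prop : ContDiff ℝ k fun z : E × P ↦ (z.2, x z.2 + r z.2 • z.1)))

lemma contDiff_sphericalFlux (hφ : ContDiff ℝ (k + 1 : ℕ) ↿φ) (hx : ContDiff ℝ k x)
    (hr : ContDiff ℝ k r) : ContDiff ℝ k fun p ↦ sphericalFlux (φ p) (x p) (r p) :=
  contDiff_integral_comp (Φ := fun (ω : E) p ↦ fderiv ℝ (φ p) (x p + r p • ω) ω)
    continuous_subtype_val
    (((contDiff_uncurry_fderiv hφ (by simp)).comp
      (by fun_prop : ContDiff ℝ k fun z : E × P ↦ (z.2, x z.2 + r z.2 • z.1))).clm_apply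
        contDiff_fst)

end Smoothness

variable {φ : E → G}

lemma hasDerivAt_sphericalIntegral (hφ : ContDiff ℝ 1 φ) (x : E) (r : ℝ) :
    HasDerivAt (sphericalIntegral φ x) (sphericalFlux φ x r) r := by
  have h := hasDerivAt_integral_comp (μ := (volume : Measure E).toSphere)
    (Φ := fun ω r ↦ φ (x + r • ω)) continuous_subtype_val
    (hφ.comp (by fun_prop : ContDiff ℝ 1 fun z : E × ℝ ↦ x + z.2 • z.1)) r
  simp only [(hasDerivAt_comp_add_smul hφ x _ r).deriv] at h
  exact h

lemma hasDerivAt_sphericalFlux (hφ : ContDiff ℝ 2 φ) (x : E) (r : ℝ) :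
    HasDerivAt (sphericalFlux φ x)
      (∫ ω : sphere (0 : E) 1, fderiv ℝ (fderiv ℝ φ) (x + r • ω) ω ω
        ∂(volume : Measure E).toSphere) r := by
  have hDφ : ContDiff ℝ 1 (fderiv ℝ φ) := hφ.fderiv_right (by norm_num)
  have hderiv (ω : E) : HasDerivAt (fun r : ℝ ↦ fderiv ℝ φ (x + r • ω) ω)
      (fderiv ℝ (fderiv ℝ φ) (x + r • ω) ω ω) r := by
    simpa using (hasDerivAt_comp_add_smul hDφ x ω r).clm_apply (hasDerivAt_const r ω)
  have h := hasDerivAt_integral_comp (μ := (volume : Measure E).toSphere)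
    (Φ := fun ω r ↦ fderiv ℝ φ (x + r • ω) ω) continuous_subtype_val
    ((hDφ.comp (by fun_prop : ContDiff ℝ 1 fun z : E × ℝ ↦ x + z.2 • z.1)).clm_apply
      contDiff_fst) r
  simp only [(hderiv _).deriv] at h
  exact h

lemma laplacian_sphericalIntegral (hφ : ContDiff ℝ 2 φ) (x : E) (r : ℝ) :
    Δ (fun y ↦ sphericalIntegral φ y r) x = sphericalIntegral (Δ φ) x r := by
  have h := laplacian_integral_comp (μ := (volume : Measure E).toSphere)
    (Φ := fun ω y ↦ φ (y + r • ω)) continuous_subtype_val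
    (hφ.comp (by fun_prop : ContDiff ℝ 2 fun z : E × E ↦ z.2 + r • z.1)) x
  simp only [laplacian_comp_add_right φ] at h
  exact h

lemma laplacian_sphericalFlux (hφ : ContDiff ℝ 3 φ) (x : E) (r : ℝ) :
    Δ (fun y ↦ sphericalFlux φ y r) x = sphericalFlux (Δ φ) x r := by
  have hDφ : ContDiff ℝ 2 (fderiv ℝ φ) := hφ.fderiv_right (by norm_num)
  have hterm (ω : E) : Δ (fun y ↦ fderiv ℝ φ (y + r • ω) ω) x = fderiv ℝ (Δ φ) (x + r • ω) ω :=
    (laplacian_comp_add_right (fun y ↦ fderiv ℝ φ y ω) (r • ω) x).trans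
      (laplacian_fderiv_apply hφ ω (x + r • ω))
  have h := laplacian_integral_comp (μ := (volume : Measure E).toSphere)
    (Φ := fun ω y ↦ fderiv ℝ φ (y + r • ω) ω) continuous_subtype_val
    ((hDφ.comp (by fun_prop : ContDiff ℝ 2 fun z : E × E ↦ z.2 + r • z.1)).clm_apply
      contDiff_fst) x
  simp only [hterm] at h
  exact h

/-- Darboux's equation, multiplied by `r`. -/
lemma smul_deriv_sphericalFlux (hφ : ContDiff ℝ 2 φ) (x : E) (r : ℝ) :
    r • deriv (sphericalFlux φ x) r =
      r • sphericalIntegral (Δ φ) x r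
        - ((Module.finrank ℝ E : ℝ) - 1) • sphericalFlux φ x r := by
  let b := stdOrthonormalBasis ℝ E
  have hDφ : ContDiff ℝ 1 (fderiv ℝ φ) := hφ.fderiv_right (by norm_num)
  have hfderiv (y v w : E) : fderiv ℝ (fun y ↦ fderiv ℝ φ (x + r • y)) y v w =
      r • fderiv ℝ (fderiv ℝ φ) (x + r • y) v w := by
    have hcomp : HasFDerivAt (fun y ↦ fderiv ℝ φ (x + r • y)) _ y :=
      (hDφ.differentiable one_ne_zero (x + r • y)).hasFDerivAt.comp y
        (((hasFDerivAt_id y).const_smul r).const_add x)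
    simp [hcomp.fderiv]
  have hdiv := integral_sphere_divergence b (X := fun y ↦ fderiv ℝ φ (x + r • y)) (by fun_prop)
  simp only [hfderiv, ← Finset.smul_sum, ← smul_sub, integral_smul,
    ← laplacian_eq_sum_fderiv_fderiv b] at hdiv
  have hΔ : Continuous (Δ φ) := (contDiff_laplacian hφ (m := 0) (by simp)).continuous
  rw [integral_sub (integrable_comp_sphere (h := fun y ↦ Δ φ (x + r • y)) (by fun_prop))
    (integrable_comp_sphere (h := fun y ↦ fderiv ℝ (fderiv ℝ φ) (x + r • y) y y) (by fun_prop)),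
    ← (hasDerivAt_sphericalFlux hφ x r).deriv] at hdiv
  change r • (sphericalIntegral (Δ φ) x r - _) = _ • sphericalFlux φ x r at hdiv
  rw [← hdiv]
  module

lemma hasDerivAt_smul_sphericalIntegral (hφ : ContDiff ℝ 1 φ) (x : E) (t : ℝ) :
    HasDerivAt (fun t ↦ t • sphericalIntegral φ x t)
      (sphericalIntegral φ x t + t • sphericalFlux φ x t) t := by
  simpa [add_comm] using (hasDerivAt_id' t).fun_smul (hasDerivAt_sphericalIntegral hφ x t)

lemma hasDerivAt_smul_sphericalFlux (hφ : ContDiff ℝ 2 φ) (x : E) (t : ℝ) :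
    HasDerivAt (fun t ↦ t • sphericalFlux φ x t)
      (t • sphericalIntegral (Δ φ) x t - ((Module.finrank ℝ E : ℝ) - 2) • sphericalFlux φ x t)
      t := by
  refine ((hasDerivAt_id' t).fun_smul
    (hasDerivAt_sphericalFlux hφ x t).differentiableAt.hasDerivAt).congr_deriv ?_
  rw [smul_deriv_sphericalFlux hφ]
  module

lemma sphericalIntegral_zero_right [CompleteSpace G] (φ : E → G) (x : E) :
    sphericalIntegral φ x 0 = (volume : Measure E).toSphere.real Set.univ • φ x := by
  simp only [sphericalIntegral, zero_smul, add_zero, integral_const]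

end SphericalIntegral

section Leibniz

variable {G : Type*} [NormedAddCommGroup G] [NormedSpace ℝ G]

lemma hasDerivAt_uncurry_curve {Φ : ℝ → ℝ → G} (hΦ : ContDiff ℝ 1 ↿Φ) {α β : ℝ → ℝ}
    {α' β' t : ℝ} (hα : HasDerivAt α α' t) (hβ : HasDerivAt β β' t) :
    HasDerivAt (fun t ↦ Φ (α t) (β t))
      (α' • deriv (Φ · (β t)) (α t) + β' • deriv (Φ (α t)) (β t)) t := by
  have hΦ' := (hΦ.differentiable one_ne_zero (α t, β t)).hasFDerivAt
  have hleft : HasDerivAt (Φ · (β t)) (fderiv ℝ ↿Φ (α t, β t) (1, 0)) (α t) :=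
    (hΦ'.comp_hasDerivAt (α t) ((hasDerivAt_id' (α t)).prodMk (hasDerivAt_const (α t) (β t))) :)
  have hright : HasDerivAt (Φ (α t)) (fderiv ℝ ↿Φ (α t, β t) (0, 1)) (β t) :=
    (hΦ'.comp_hasDerivAt (β t) ((hasDerivAt_const (β t) (α t)).prodMk (hasDerivAt_id' (β t))) :)
  have hcurve : HasDerivAt (fun t ↦ Φ (α t) (β t)) (fderiv ℝ ↿Φ (α t, β t) (α', β')) t :=
    (hΦ'.comp_hasDerivAt t (hα.prodMk hβ) :)
  rw [hleft.deriv, hright.deriv, ← map_smul, ← map_smul, ← map_add]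
  simpa using hcurve

lemma intervalIntegral_eq_smul_integral_unitInterval (h : ℝ → G) (t : ℝ) :
    ∫ τ in (0 : ℝ)..t, h τ = t • ∫ s : unitInterval, h (t * s) := by
  rw [show ∫ s : unitInterval, h (t * s) = ∫ s in unitInterval, h (t * s) from
      integral_subtype measurableSet_Icc fun s ↦ h (t * s),
    integral_Icc_eq_integral_Ioc, ← intervalIntegral.integral_of_le zero_le_one,
    intervalIntegral.smul_integral_comp_mul_left, mul_zero, mul_one]

lemma contDiff_intervalIntegral {P : Type*} [NormedAddCommGroup P] [NormedSpace ℝ P]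
    [FiniteDimensional ℝ P] {n : ℕ} {k : P → ℝ → G} {t : P → ℝ} (hk : ContDiff ℝ n ↿k)
    (ht : ContDiff ℝ n t) : ContDiff ℝ n fun p ↦ ∫ τ in (0 : ℝ)..t p, k p τ := by
  simp only [intervalIntegral_eq_smul_integral_unitInterval]
  exact ht.smul (contDiff_integral_comp (Φ := fun (s : ℝ) p ↦ k p (t p * s)) continuous_subtype_val
    (hk.comp (by fun_prop : ContDiff ℝ n fun z : ℝ × P ↦ (z.2, t z.2 * z.1))))

lemma hasDerivAt_intervalIntegral_param {k : ℝ → ℝ → G} (hk : ContDiff ℝ 1 ↿k) (a t : ℝ) :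
    HasDerivAt (fun t ↦ ∫ τ in (0 : ℝ)..a, k t τ) (∫ τ in (0 : ℝ)..a, deriv (k · τ) t) t := by
  simp only [intervalIntegral_eq_smul_integral_unitInterval]
  exact (hasDerivAt_integral_comp (Φ := fun (s : ℝ) t ↦ k t (a * s)) continuous_subtype_val
    (hk.comp (by fun_prop : ContDiff ℝ 1 fun z : ℝ × ℝ ↦ (z.2, a * z.1))) t).const_smul a

lemma hasDerivAt_intervalIntegral_diag [CompleteSpace G] {k : ℝ → ℝ → G} (hk : ContDiff ℝ 1 ↿k)
    (t : ℝ) :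
    HasDerivAt (fun t ↦ ∫ τ in (0 : ℝ)..t, k t τ)
      (k t t + ∫ τ in (0 : ℝ)..t, deriv (k · τ) t) t := by
  have hsmooth : ContDiff ℝ 1 ↿(fun t a ↦ ∫ τ in (0 : ℝ)..a, k t τ) :=
    contDiff_intervalIntegral (n := 1) (k := fun z : ℝ × ℝ ↦ k z.1)
      (hk.comp (by fun_prop : ContDiff ℝ 1 fun w : (ℝ × ℝ) × ℝ ↦ (w.1.1, w.2))) contDiff_snd
  have h := hasDerivAt_uncurry_curve hsmooth (hasDerivAt_id t) (hasDerivAt_id t)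
  simp only [id, (hasDerivAt_intervalIntegral_param hk t t).deriv, one_smul,
    (contDiff_uncurry_left hk t).continuous.deriv_integral] at h
  rwa [add_comm]

lemma hasDerivAt_intervalIntegral_comp_sub [CompleteSpace G] {k : ℝ → ℝ → G}
    (hk : ContDiff ℝ 1 ↿k) (t : ℝ) :
    HasDerivAt (fun t ↦ ∫ τ in (0 : ℝ)..t, k τ (t - τ))
      (k t 0 + ∫ τ in (0 : ℝ)..t, deriv (k τ) (t - τ)) t := by
  simpa only [sub_self, deriv_comp_sub_const] using
    hasDerivAt_intervalIntegral_diag (k := fun t τ ↦ k τ (t - τ))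
      (hk.comp (by fun_prop : ContDiff ℝ 1 fun z : ℝ × ℝ ↦ (z.2, z.1 - z.2))) t

lemma deriv_deriv_intervalIntegral_comp_sub [CompleteSpace G] {k : ℝ → ℝ → G}
    (hk : ContDiff ℝ 2 ↿k) (hk0 : ∀ τ, k τ 0 = 0) (t : ℝ) :
    deriv (deriv fun t ↦ ∫ τ in (0 : ℝ)..t, k τ (t - τ)) t =
      deriv (k t) 0 + ∫ τ in (0 : ℝ)..t, deriv (deriv (k τ)) (t - τ) := by
  have hderiv : deriv (fun t ↦ ∫ τ in (0 : ℝ)..t, k τ (t - τ)) =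
      fun t ↦ ∫ τ in (0 : ℝ)..t, deriv (k τ) (t - τ) := funext fun t ↦ by
    simpa only [hk0, zero_add] using
      (hasDerivAt_intervalIntegral_comp_sub (hk.of_le one_le_two) t).deriv
  rw [hderiv]
  exact (hasDerivAt_intervalIntegral_comp_sub (contDiff_uncurry_deriv hk (by norm_num)) t).deriv

variable {E : Type*} [NormedAddCommGroup E] [InnerProductSpace ℝ E] [FiniteDimensional ℝ E]

open Laplacian in
lemma laplacian_intervalIntegral {k : ℝ → E → G} (hk : ContDiff ℝ 2 ↿k) (a : ℝ) (x : E) :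
    Δ (fun x ↦ ∫ τ in (0 : ℝ)..a, k τ x) x = ∫ τ in (0 : ℝ)..a, Δ (k τ) x := by
  have hk' : ContDiff ℝ 2 ↿(fun s ↦ k (a * s)) :=
    hk.comp (by fun_prop : ContDiff ℝ 2 fun z : ℝ × E ↦ (a * z.1, z.2))
  simp only [intervalIntegral_eq_smul_integral_unitInterval]
  rw [← laplacian_integral_comp (c := ((↑) : unitInterval → ℝ)) continuous_subtype_val hk' x]
  exact InnerProductSpace.laplacian_smul a (contDiff_integral_comp (n := 2)
    (c := ((↑) : unitInterval → ℝ)) continuous_subtype_val hk').contDiffAt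

end Leibniz

section Wave

open Laplacian

variable {E G : Type*} [NormedAddCommGroup E] [InnerProductSpace ℝ E] [FiniteDimensional ℝ E]
  [NormedAddCommGroup G] [NormedSpace ℝ G]

/-- The wave operator `∂ₜ² - Δ`, applied to a function of position and time. -/
noncomputable def dAlembertian (u : E → ℝ → G) (x : E) (t : ℝ) : G :=
  deriv (deriv (u x)) t - Δ (fun y ↦ u y t) x

lemma dAlembertian_add {u v : E → ℝ → G} (hu : ContDiff ℝ 2 ↿u) (hv : ContDiff ℝ 2 ↿v) (x : E)
    (t : ℝ) :
    dAlembertian (fun x t ↦ u x t + v x t) x t = dAlembertian u x t + dAlembertian v x t := by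
  have hux := contDiff_uncurry_left hu x
  have hvx := contDiff_uncurry_left hv x
  have hderiv : deriv (fun t ↦ u x t + v x t) = fun t ↦ deriv (u x) t + deriv (v x) t :=
    funext fun t ↦ deriv_fun_add (hux.differentiable two_ne_zero t)
      (hvx.differentiable two_ne_zero t)
  have hΔ : Δ (fun y ↦ u y t + v y t) x = Δ (fun y ↦ u y t) x + Δ (fun y ↦ v y t) x :=
    ContDiffAt.laplacian_add (contDiff_uncurry_right hu t).contDiffAt
      (contDiff_uncurry_right hv t).contDiffAt
  rw [dAlembertian, hderiv, hΔ,
    deriv_fun_add (hux.differentiable_deriv_two t) (hvx.differentiable_deriv_two t)]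
  simp only [dAlembertian]
  abel

lemma dAlembertian_const_smul (a : ℝ) {u : E → ℝ → G} (hu : ContDiff ℝ 2 ↿u) (x : E) (t : ℝ) :
    dAlembertian (fun x t ↦ a • u x t) x t = a • dAlembertian u x t := by
  have hΔ : Δ (fun y ↦ a • u y t) x = a • Δ (fun y ↦ u y t) x :=
    InnerProductSpace.laplacian_smul a (contDiff_uncurry_right hu t).contDiffAt
  have hderiv : deriv (fun t ↦ a • u x t) = fun t ↦ a • deriv (u x) t :=
    funext fun _ ↦ deriv_fun_const_smul_field a (u x)
  rw [dAlembertian, hderiv, hΔ, deriv_fun_const_smul_field, dAlembertian, smul_sub]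

section Duhamel

variable {v : ℝ → E → ℝ → G}

lemma contDiff_duhamel {n : ℕ} (hv : ContDiff ℝ n ↿v) :
    ContDiff ℝ n ↿(fun x t ↦ ∫ τ in (0 : ℝ)..t, v τ x (t - τ)) :=
  contDiff_intervalIntegral (k := fun (z : E × ℝ) τ ↦ v τ z.1 (z.2 - τ))
    (hv.comp (by fun_prop : ContDiff ℝ n fun w : (E × ℝ) × ℝ ↦ (w.2, w.1.1, w.1.2 - w.2)))
    contDiff_snd

lemma dAlembertian_duhamel [CompleteSpace G] (hv : ContDiff ℝ 2 ↿v) (hv0 : ∀ τ x, v τ x 0 = 0)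
    (x : E) (t : ℝ) :
    dAlembertian (fun x t ↦ ∫ τ in (0 : ℝ)..t, v τ x (t - τ)) x t =
      deriv (v t x) 0 + ∫ τ in (0 : ℝ)..t, dAlembertian (v τ) x (t - τ) := by
  have hvx : ContDiff ℝ 2 ↿(fun τ ↦ v τ x) :=
    hv.comp (by fun_prop : ContDiff ℝ 2 fun z : ℝ × ℝ ↦ (z.1, x, z.2))
  have hvt : ContDiff ℝ 2 ↿(fun τ y ↦ v τ y (t - τ)) :=
    hv.comp (by fun_prop : ContDiff ℝ 2 fun z : ℝ × E ↦ (z.1, z.2, t - z.1))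
  have hvx' : ContDiff ℝ 1 ↿(fun τ ↦ deriv (v τ x)) := contDiff_uncurry_deriv hvx (by norm_num)
  have hderiv : Continuous fun τ ↦ deriv (deriv (v τ x)) (t - τ) :=
    (contDiff_uncurry_deriv (m := 0) hvx' (by simp)).continuous.comp
      (by fun_prop : Continuous fun τ : ℝ ↦ (τ, t - τ))
  have hΔ : Continuous fun τ ↦ Δ (fun y ↦ v τ y (t - τ)) x :=
    contDiff_zero.1 (contDiff_uncurry_right (contDiff_uncurry_laplacian hvt (zero_add 2).le) x)
  simp only [dAlembertian]
  rw [deriv_deriv_intervalIntegral_comp_sub hvx (hv0 · x),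
    laplacian_intervalIntegral hvt, add_sub_assoc, intervalIntegral.integral_sub
      (hderiv.intervalIntegrable 0 t) (hΔ.intervalIntegrable 0 t)]

end Duhamel

end Wave

section SphericalWaves

open Laplacian

variable {E : Type*} [NormedAddCommGroup E] [InnerProductSpace ℝ E] [FiniteDimensional ℝ E]
  [MeasurableSpace E] [BorelSpace E] {G : Type*} [NormedAddCommGroup G] [NormedSpace ℝ G]

section InitialData

variable {φ : E → G}

lemma contDiff_smul_sphericalIntegral (hφ : ContDiff ℝ 2 φ) :
    ContDiff ℝ 2 ↿(fun x t ↦ t • sphericalIntegral φ x t) :=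
  contDiff_snd.smul (contDiff_sphericalIntegral (k := 2) (φ := fun _ : E × ℝ ↦ φ)
    (hφ.comp contDiff_snd) contDiff_fst contDiff_snd)

lemma contDiff_smul_sphericalFlux_add_smul_sphericalIntegral (hφ : ContDiff ℝ 3 φ) (a : ℝ) :
    ContDiff ℝ 2 ↿(fun x t ↦ t • sphericalFlux φ x t + a • sphericalIntegral φ x t) :=
  (contDiff_snd.smul (contDiff_sphericalFlux (k := 2) (φ := fun _ : E × ℝ ↦ φ)
    (hφ.comp contDiff_snd) contDiff_fst contDiff_snd)).add
  (contDiff_const.smul (contDiff_sphericalIntegral (k := 2) (φ := fun _ : E × ℝ ↦ φ)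
    ((hφ.of_le (by norm_num)).comp contDiff_snd) contDiff_fst contDiff_snd))

lemma dAlembertian_smul_sphericalIntegral (hφ : ContDiff ℝ 2 φ) (x : E) (t : ℝ) :
    dAlembertian (fun x t ↦ t • sphericalIntegral φ x t) x t =
      (3 - (Module.finrank ℝ E : ℝ)) • sphericalFlux φ x t := by
  have hφ1 : ContDiff ℝ 1 φ := hφ.of_le one_le_two
  have hderiv : deriv (fun t ↦ t • sphericalIntegral φ x t) =
      fun t ↦ sphericalIntegral φ x t + t • sphericalFlux φ x t :=
    funext fun t ↦ (hasDerivAt_smul_sphericalIntegral hφ1 x t).deriv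
  have hS : ContDiff ℝ 2 fun y ↦ sphericalIntegral φ y t :=
    contDiff_sphericalIntegral (k := 2) (φ := fun _ ↦ φ) (hφ.comp contDiff_snd) contDiff_id
      contDiff_const
  have hΔ : Δ (fun y ↦ t • sphericalIntegral φ y t) x = t • sphericalIntegral (Δ φ) x t :=
    (InnerProductSpace.laplacian_smul t hS.contDiffAt).trans
      (congrArg _ (laplacian_sphericalIntegral hφ x t))
  rw [dAlembertian, hderiv, hΔ, ((hasDerivAt_sphericalIntegral hφ1 x t).fun_add
    (hasDerivAt_smul_sphericalFlux hφ x t)).deriv]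
  module

lemma dAlembertian_smul_sphericalFlux_add_smul_sphericalIntegral (hφ : ContDiff ℝ 3 φ) (x : E)
    (t : ℝ) :
    dAlembertian (fun x t ↦ t • sphericalFlux φ x t
        + ((Module.finrank ℝ E : ℝ) - 2) • sphericalIntegral φ x t) x t =
      (3 - (Module.finrank ℝ E : ℝ)) • sphericalIntegral (Δ φ) x t := by
  have hφ2 : ContDiff ℝ 2 φ := hφ.of_le (by norm_num)
  have hderiv : deriv (fun t ↦ t • sphericalFlux φ x t
      + ((Module.finrank ℝ E : ℝ) - 2) • sphericalIntegral φ x t) =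
      fun t ↦ t • sphericalIntegral (Δ φ) x t := funext fun t ↦ by
    rw [((hasDerivAt_smul_sphericalFlux hφ2 x t).fun_add
      ((hasDerivAt_sphericalIntegral (hφ.of_le (by norm_num)) x t).fun_const_smul _)).deriv]
    module
  have hS : ContDiff ℝ 2 fun y ↦ sphericalIntegral φ y t :=
    contDiff_sphericalIntegral (k := 2) (φ := fun _ ↦ φ) (hφ2.comp contDiff_snd) contDiff_id
      contDiff_const
  have hflux : ContDiff ℝ 2 fun y ↦ sphericalFlux φ y t :=
    contDiff_sphericalFlux (k := 2) (φ := fun _ ↦ φ) (hφ.comp contDiff_snd) contDiff_id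
      contDiff_const
  have hΔ : Δ (fun y ↦ t • sphericalFlux φ y t
      + ((Module.finrank ℝ E : ℝ) - 2) • sphericalIntegral φ y t) x =
      t • sphericalFlux (Δ φ) x t
        + ((Module.finrank ℝ E : ℝ) - 2) • sphericalIntegral (Δ φ) x t := by
    rw [← laplacian_sphericalFlux hφ, ← laplacian_sphericalIntegral hφ2,
      ← InnerProductSpace.laplacian_smul _ hflux.contDiffAt,
      ← InnerProductSpace.laplacian_smul _ hS.contDiffAt]
    exact (contDiff_const.smul hflux).contDiffAt.laplacian_add
      (contDiff_const.smul hS).contDiffAt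
  rw [dAlembertian, hderiv, hΔ, (hasDerivAt_smul_sphericalIntegral
    (contDiff_laplacian hφ (by norm_num)) x t).deriv]
  module

end InitialData

section Source

variable {F : E → ℝ → G}

lemma hasDerivAt_sphericalIntegral_param (hF : ContDiff ℝ 1 ↿F) (x : E) (r τ : ℝ) :
    HasDerivAt (fun τ ↦ sphericalIntegral (F · τ) x r)
      (sphericalIntegral (fun y ↦ deriv (F y) τ) x r) τ :=
  hasDerivAt_integral_comp (Φ := fun (ω : E) τ ↦ F (x + r • ω) τ) continuous_subtype_val
    (hF.comp (by fun_prop : ContDiff ℝ 1 fun z : E × ℝ ↦ (x + r • z.1, z.2))) τ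

lemma integral_sphericalFlux_comp_sub [CompleteSpace G] (hF : ContDiff ℝ 1 ↿F) (x : E) (t : ℝ) :
    ∫ τ in (0 : ℝ)..t, sphericalFlux (F · τ) x (t - τ) =
      (∫ τ in (0 : ℝ)..t, sphericalIntegral (fun y ↦ deriv (F y) τ) x (t - τ))
        + sphericalIntegral (F · 0) x t - sphericalIntegral (F · t) x 0 := by
  have hsub : ContDiff ℝ 0 fun τ : ℝ ↦ t - τ := by fun_prop
  have hflux : Continuous fun τ ↦ sphericalFlux (F · τ) x (t - τ) :=
    (contDiff_sphericalFlux (k := 0) (contDiff_uncurry_swap (by simpa using hF)) contDiff_const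
      hsub).continuous
  have hdot : Continuous fun τ ↦ sphericalIntegral (fun y ↦ deriv (F y) τ) x (t - τ) :=
    (contDiff_sphericalIntegral (k := 0)
      (contDiff_uncurry_swap (contDiff_uncurry_deriv hF (by simp))) contDiff_const hsub).continuous
  have hsmooth : ContDiff ℝ 1 ↿(fun τ r ↦ sphericalIntegral (F · τ) x r) :=
    contDiff_sphericalIntegral (k := 1) (φ := fun (z : ℝ × ℝ) y ↦ F y z.1)
      (hF.comp (by fun_prop : ContDiff ℝ 1 fun w : (ℝ × ℝ) × E ↦ (w.2, w.1.1)))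
      contDiff_const contDiff_snd
  have hderiv (τ : ℝ) : HasDerivAt (fun τ ↦ sphericalIntegral (F · τ) x (t - τ))
      (sphericalIntegral (fun y ↦ deriv (F y) τ) x (t - τ) - sphericalFlux (F · τ) x (t - τ))
      τ := by
    have h := hasDerivAt_uncurry_curve hsmooth (hasDerivAt_id' τ) ((hasDerivAt_id' τ).const_sub t)
    rwa [(hasDerivAt_sphericalIntegral_param hF x (t - τ) τ).deriv,
      (hasDerivAt_sphericalIntegral (contDiff_uncurry_right hF τ) x (t - τ)).deriv, one_smul,
      neg_one_smul, ← sub_eq_add_neg] at h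
  have hFTC := intervalIntegral.integral_eq_sub_of_hasDerivAt (fun τ _ ↦ hderiv τ)
    ((hdot.sub hflux).intervalIntegrable 0 t)
  rw [intervalIntegral.integral_sub (hdot.intervalIntegrable 0 t)
    (hflux.intervalIntegrable 0 t), sub_self, sub_zero, sub_eq_iff_eq_add] at hFTC
  rw [hFTC]
  abel

lemma contDiff_smul_sphericalIntegral_param (hF : ContDiff ℝ 2 ↿F) :
    ContDiff ℝ 2 ↿(fun τ x r ↦ r • sphericalIntegral (F · τ) x r) :=
  contDiff_snd.snd.smul (contDiff_sphericalIntegral (k := 2) (φ := fun (z : ℝ × E × ℝ) y ↦ F y z.1)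
    (hF.comp (by fun_prop : ContDiff ℝ 2 fun w : (ℝ × E × ℝ) × E ↦ (w.2, w.1.1)))
    contDiff_snd.fst contDiff_snd.snd)

lemma dAlembertian_duhamel_smul_sphericalIntegral [CompleteSpace G] (hF : ContDiff ℝ 2 ↿F) (x : E)
    (t : ℝ) :
    dAlembertian (fun x t ↦ ∫ τ in (0 : ℝ)..t, (t - τ) • sphericalIntegral (F · τ) x (t - τ)) x t =
      (((Module.finrank ℝ E : ℝ) - 2) * (volume : Measure E).toSphere.real Set.univ) • F x t
        + (3 - (Module.finrank ℝ E : ℝ)) •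
          ((∫ τ in (0 : ℝ)..t, sphericalIntegral (fun y ↦ deriv (F y) τ) x (t - τ))
            + sphericalIntegral (F · 0) x t) := by
  have hslice (τ : ℝ) : ContDiff ℝ 2 (F · τ) := contDiff_uncurry_right hF τ
  rw [dAlembertian_duhamel (contDiff_smul_sphericalIntegral_param hF) fun _ _ ↦ zero_smul ℝ _,
    (hasDerivAt_smul_sphericalIntegral ((hslice t).of_le one_le_two) x 0).deriv]
  simp only [fun τ ↦ dAlembertian_smul_sphericalIntegral (hslice τ), zero_smul, add_zero,
    intervalIntegral.integral_smul]
  rw [integral_sphericalFlux_comp_sub (hF.of_le one_le_two), sphericalIntegral_zero_right]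
  module

end Source

end SphericalWaves

section Euclidean

open Laplacian

variable {n : ℕ} {f g : EuclideanSpace ℝ (Fin n) → ℝ} {F : EuclideanSpace ℝ (Fin n) → ℝ → ℝ}

lemma laplacian_eq_innerProductSpace_laplacian (hf : ContDiff ℝ 2 f) : laplacian n f = Δ f := by
  ext x
  simp [laplacian_eq_sum_fderiv_apply (EuclideanSpace.basisFun (Fin n) ℝ) hf, _root_.laplacian]

lemma sphereArea_ne_zero (hn : n ≠ 0) : sphereArea n ≠ 0 := by
  have : Nonempty (Fin n) := Fin.pos_iff_nonempty.1 (Nat.pos_of_ne_zero hn)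
  let σ := (volume : Measure (EuclideanSpace ℝ (Fin n))).toSphere
  exact ENNReal.toReal_ne_zero.2
    ⟨(Measure.measure_univ_ne_zero (μ := σ)).2 (Measure.toSphere_ne_zero _), measure_ne_top σ _⟩

lemma deriv_deriv_sub_laplacian_eq_dAlembertian {u : EuclideanSpace ℝ (Fin n) → ℝ → ℝ}
    (hu : ContDiff ℝ 2 ↿u) (x : EuclideanSpace ℝ (Fin n)) (t : ℝ) :
    deriv (fun s ↦ deriv (fun s' ↦ u x s') s) t - laplacian n (fun y ↦ u y t) x =
      dAlembertian u x t := by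
  rw [laplacian_eq_innerProductSpace_laplacian (contDiff_uncurry_right hu t)]
  rfl

lemma linearPart_eq (hn : n ≠ 2) (hf : ContDiff ℝ 1 f) (hg : Continuous g) :
    linearPart n f g = fun x t ↦ (((n : ℝ) - 2) * sphereArea n)⁻¹ •
      ((t • sphericalFlux f x t + ((n : ℝ) - 2) • sphericalIntegral f x t)
        + ((n : ℝ) - 2) • t • sphericalIntegral g x t) := by
  have hn' : (n : ℝ) - 2 ≠ 0 := sub_ne_zero.2 (mod_cast hn)
  ext x t
  have hfluxI := integrable_comp_sphere
    (h := fun y ↦ t * fderiv ℝ f (x + t • y) y / ((n : ℝ) - 2)) (by fun_prop)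
  have hfI := integrable_comp_sphere (h := fun y ↦ f (x + t • y)) (by fun_prop)
  have hgI := integrable_comp_sphere (h := fun y ↦ t * g (x + t • y)) (by fun_prop)
  rw [linearPart, sphereMeasure, integral_add (hfluxI.fun_add hfI) hgI, integral_add hfluxI hfI,
    integral_div, integral_const_mul, integral_const_mul]
  change (sphereArea n)⁻¹ *
    (t * sphericalFlux f x t / ((n : ℝ) - 2) + sphericalIntegral f x t
      + t * sphericalIntegral g x t) = _
  simp only [smul_eq_mul]
  field_simp

lemma contDiff_linearPart (hn : n ≠ 2) (hf : ContDiff ℝ 3 f) (hg : ContDiff ℝ 2 g) :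
    ContDiff ℝ 2 ↿(linearPart n f g) := by
  rw [linearPart_eq hn (hf.of_le (by norm_num)) hg.continuous]
  have hf_smooth := contDiff_smul_sphericalFlux_add_smul_sphericalIntegral hf ((n : ℝ) - 2)
  have hg_smooth := (contDiff_smul_sphericalIntegral hg).const_smul ((n : ℝ) - 2)
  exact (hf_smooth.add hg_smooth).const_smul (((n : ℝ) - 2) * sphereArea n)⁻¹

lemma dAlembertian_linearPart (hn : n ≠ 2) (hf : ContDiff ℝ 3 f) (hg : ContDiff ℝ 2 g)
    (x : EuclideanSpace ℝ (Fin n)) (t : ℝ) :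
    dAlembertian (linearPart n f g) x t =
      -(((n : ℝ) - 3) / (((n : ℝ) - 2) * sphereArea n)) *
        (sphericalIntegral (Δ f) x t + ((n : ℝ) - 2) * sphericalFlux g x t) := by
  have hf_smooth := contDiff_smul_sphericalFlux_add_smul_sphericalIntegral hf ((n : ℝ) - 2)
  have hg_smooth := contDiff_smul_sphericalIntegral hg
  have hg_smooth' : ContDiff ℝ 2 ↿(fun x t ↦ ((n : ℝ) - 2) • t • sphericalIntegral g x t) :=
    hg_smooth.const_smul ((n : ℝ) - 2)
  have hLf := dAlembertian_smul_sphericalFlux_add_smul_sphericalIntegral hf x t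
  have hLg := dAlembertian_smul_sphericalIntegral hg x t
  rw [finrank_euclideanSpace_fin] at hLf hLg
  rw [linearPart_eq hn (hf.of_le (by norm_num)) hg.continuous,
    dAlembertian_const_smul _ (hf_smooth.add hg_smooth'),
    dAlembertian_add hf_smooth hg_smooth', dAlembertian_const_smul _ hg_smooth, hLf, hLg]
  simp only [smul_eq_mul, div_eq_mul_inv]
  ring

lemma contDiff_duhamelOp (hF : ContDiff ℝ 2 ↿F) : ContDiff ℝ 2 ↿(duhamelOp n F) :=
  (contDiff_duhamel (n := 2) (contDiff_smul_sphericalIntegral_param hF)).const_smul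
    (((n : ℝ) - 2) * sphereArea n)⁻¹

lemma dAlembertian_duhamelOp (hn₀ : n ≠ 0) (hn₂ : n ≠ 2) (hF : ContDiff ℝ 2 ↿F)
    (x : EuclideanSpace ℝ (Fin n)) (t : ℝ) :
    dAlembertian (duhamelOp n F) x t =
      F x t - ((n : ℝ) - 3) / (((n : ℝ) - 2) * sphereArea n) *
        ((∫ τ in (0 : ℝ)..t, sphericalIntegral (fun y ↦ deriv (F y) τ) x (t - τ))
          + sphericalIntegral (F · 0) x t) := by
  have hn' : (n : ℝ) - 2 ≠ 0 := sub_ne_zero.2 (mod_cast hn₂)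
  have hω := sphereArea_ne_zero hn₀
  have hD := dAlembertian_duhamel_smul_sphericalIntegral hF x t
  rw [finrank_euclideanSpace_fin] at hD
  refine (dAlembertian_const_smul _
    (contDiff_duhamel (n := 2) (contDiff_smul_sphericalIntegral_param hF)) x t).trans ?_
  rw [hD]
  change (((n : ℝ) - 2) * sphereArea n)⁻¹ * (((n : ℝ) - 2) * sphereArea n * _ + _ * _) = _
  field_simp
  ring

lemma correctionH_eq (hf : ContDiff ℝ 2 f) (hg : ContDiff ℝ 1 g) (ε : ℝ)
    (x : EuclideanSpace ℝ (Fin n)) (t : ℝ) :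
    correctionH n ε f g F x t = ((n : ℝ) - 3) / (((n : ℝ) - 2) * sphereArea n) *
      ((∫ τ in (0 : ℝ)..t, sphericalIntegral (fun y ↦ deriv (F y) τ) x (t - τ))
        + sphericalIntegral (F · 0) x t
        + ε * (sphericalIntegral (Δ f) x t + ((n : ℝ) - 2) * sphericalFlux g x t)) := by
  have hΔ : Continuous (Δ f) := (contDiff_laplacian hf (m := 0) (by simp)).continuous
  rw [correctionH, laplacian_eq_innerProductSpace_laplacian hf, sphereMeasure, integral_add
    (integrable_comp_sphere (h := fun y ↦ Δ f (x + t • y)) (by fun_prop))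
    (integrable_comp_sphere (h := fun y ↦ ((n : ℝ) - 2) * fderiv ℝ g (x + t • y) y) (by fun_prop)),
    integral_const_mul]
  rfl

end Euclidean

theorem AT_wave_equation_general (n : ℕ) (hn₀ : n ≠ 0) (hn₂ : n ≠ 2) (ε : ℝ)
    (f g : EuclideanSpace ℝ (Fin n) → ℝ) (hf : ContDiff ℝ 3 f) (hg : ContDiff ℝ 2 g)
    (F : EuclideanSpace ℝ (Fin n) → ℝ → ℝ)
    (hF : ContDiff ℝ 2 (fun p : EuclideanSpace ℝ (Fin n) × ℝ => F p.1 p.2))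
    (u : EuclideanSpace ℝ (Fin n) → ℝ → ℝ)
    (hu : ∀ x t, u x t = ε * linearPart n f g x t + duhamelOp n F x t)
    (x : EuclideanSpace ℝ (Fin n)) (t : ℝ) :
    deriv (fun s => deriv (fun s' => u x s') s) t - laplacian n (fun y => u y t) x =
      F x t - correctionH n ε f g F x t := by
  have hu_eq : u = fun x t ↦ ε • linearPart n f g x t + duhamelOp n F x t := funext₂ hu
  have hV : ContDiff ℝ 2 ↿(linearPart n f g) := contDiff_linearPart hn₂ hf hg
  have hεV : ContDiff ℝ 2 ↿(fun x t ↦ ε • linearPart n f g x t) := hV.const_smul ε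
  have hN : ContDiff ℝ 2 ↿(duhamelOp n F) := contDiff_duhamelOp hF
  have hu₂ : ContDiff ℝ 2 ↿u := hu_eq ▸ hεV.add hN
  rw [deriv_deriv_sub_laplacian_eq_dAlembertian hu₂, hu_eq, dAlembertian_add hεV hN,
    dAlembertian_const_smul ε hV, dAlembertian_linearPart hn₂ hf hg,
    dAlembertian_duhamelOp hn₀ hn₂ hF, correctionH_eq (hf.of_le (by norm_num))
      (hg.of_le one_le_two), smul_eq_mul]
  ring

/-- Theorem 1: a solution of the Agemi–Takamura integral equation solves
`∂ₜ²u − Δu = F − H`. -/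
theorem AT_wave_equation (n : ℕ) (hn : 3 ≤ n) (ε : ℝ)
    (f g : EuclideanSpace ℝ (Fin n) → ℝ)
    (hf : ContDiff ℝ 3 f) (hg : ContDiff ℝ 2 g)
    (F : EuclideanSpace ℝ (Fin n) → ℝ → ℝ)
    (hF : ContDiff ℝ 2 (fun p : EuclideanSpace ℝ (Fin n) × ℝ => F p.1 p.2))
    (u : EuclideanSpace ℝ (Fin n) → ℝ → ℝ)
    (hu : ∀ x t, u x t = ε * linearPart n f g x t + duhamelOp n F x t) :
    ∀ x t, 0 ≤ t →
      deriv (fun s => deriv (fun s' => u x s') s) t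
          - laplacian n (fun y => u y t) x
        = F x t - correctionH n ε f g F x t :=
  fun x t _ ↦ AT_wave_equation_general n (by lia) (by lia) ε f g hf hg F hF u hu x t
end

section
/- Let b ∈ C([0,∞)), n ≥ 2, x ∈ ℝⁿ with r = |x| > 0, and ρ > 0. Then ∫_{|ω|=1} b(|x + ρω|) dS_ω = 2^{3−n} ω_{n−1} (rρ)^{2−n} ∫_{|ρ−r|}^{ρ+r} λ b(λ) (λ² − (ρ−r)²)^{(n−3)/2} ((ρ+r)² − λ²)^{(n−3)/2} dλ, where ω_{n−1} is the surface measure of the unit sphere in ℝ^{n−1}. -/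
open MeasureTheory Metric

/-!
Put `r = ‖x‖`. The norm `λ = ‖x + ρ • ω‖` depends on `ω` only through the cosine `cos θ` of its
angle to `x`, since `λ ^ 2 = r ^ 2 + ρ ^ 2 + 2 r ρ cos θ`.

Integrate `w ‖y‖ * f (⟪e, y⟫ / ‖y‖)` over the space in two ways, where `e` is a unit vector and `w`
satisfies `∫ r ^ (n - 1) w r dr = 1` over `(0, ∞)`. In polar coordinates one gets the integral of
`f ⟪e, ω⟫` over the sphere; in cylindrical coordinates around the axis `e`, followed by polar
coordinates in the half plane, one gets `ω_{n-1} ∫ sin θ ^ (n - 2) f (cos θ) dθ` over `(0, π)`.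

The substitution `θ ↦ λ` then produces the kernel, because `λ dλ = -r ρ sin θ dθ` and
`(λ ^ 2 - (ρ - r) ^ 2) * ((ρ + r) ^ 2 - λ ^ 2) = (2 r ρ sin θ) ^ 2`. The computation takes place in
`ℝ≥0∞` and identifies the distribution of `λ` under the surface measure, so that integrability only
matters when `b` is integrated against that distribution.
-/

section

open Set Module
open scoped ENNReal InnerProductSpace

section Polar

variable {E : Type*} [NormedAddCommGroup E] [NormedSpace ℝ E] [FiniteDimensional ℝ E]
  [MeasurableSpace E] [BorelSpace E] [Nontrivial E] (μ : Measure E) [μ.IsAddHaarMeasure]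

theorem lintegral_addHaar_eq_lintegral_toSphere_Ioi {f : E → ℝ≥0∞} (hf : Measurable f) :
    ∫⁻ y, f y ∂μ = ∫⁻ ω : sphere (0 : E) 1, (∫⁻ r in Ioi (0 : ℝ),
      ENNReal.ofReal (r ^ (finrank ℝ E - 1)) * f (r • (ω : E))) ∂μ.toSphere := by
  calc ∫⁻ y, f y ∂μ
      = ∫⁻ y : ({0}ᶜ : Set E), f y ∂(μ.comap (↑)) := by
        rw [lintegral_subtype_comap (measurableSet_singleton _).compl, restrict_compl_singleton]
    _ = ∫⁻ p : sphere (0 : E) 1 × Ioi (0 : ℝ), f ((p.2 : ℝ) • (p.1 : E))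
          ∂(μ.toSphere.prod (.volumeIoiPow (finrank ℝ E - 1))) := by
        rw [← μ.measurePreserving_homeomorphUnitSphereProd.lintegral_comp_emb
          (Homeomorph.measurableEmbedding _)]
        refine lintegral_congr fun y => ?_
        have hy : ‖(y : E)‖ ≠ 0 := norm_ne_zero_iff.2 y.2
        simp [smul_smul, mul_inv_cancel₀ hy]
    _ = ∫⁻ ω : sphere (0 : E) 1, (∫⁻ r : Ioi (0 : ℝ), f ((r : ℝ) • (ω : E))
          ∂(.volumeIoiPow (finrank ℝ E - 1))) ∂μ.toSphere :=
        lintegral_prod _ (by fun_prop)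
    _ = _ := by
        refine lintegral_congr fun ω => ?_
        rw [Measure.volumeIoiPow, lintegral_withDensity_eq_lintegral_mul _ (by fun_prop)
          (by fun_prop), ← lintegral_subtype_comap measurableSet_Ioi]
        rfl

theorem lintegral_comp_norm_addHaar {f : ℝ → ℝ≥0∞} (hf : Measurable f) :
    ∫⁻ y, f ‖y‖ ∂μ = μ.toSphere univ *
      ∫⁻ r in Ioi (0 : ℝ), ENNReal.ofReal (r ^ (finrank ℝ E - 1)) * f r := by
  rw [lintegral_addHaar_eq_lintegral_toSphere_Ioi μ (by fun_prop), mul_comm, ← lintegral_const]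
  refine lintegral_congr fun ω => setLIntegral_congr_fun measurableSet_Ioi fun r hr => ?_
  simp only [norm_smul, norm_eq_of_mem_sphere, mul_one, Real.norm_of_nonneg (mem_Ioi.1 hr).le]

end Polar

theorem setLIntegral_upperHalfPlane_eq_polar (f : ℝ × ℝ → ℝ≥0∞) :
    ∫⁻ p in univ ×ˢ Ioi 0, f p = ∫⁻ p in Ioi (0 : ℝ) ×ˢ Ioo 0 Real.pi,
      ENNReal.ofReal p.1 * f (p.1 * Real.cos p.2, p.1 * Real.sin p.2) := by
  have h_upper : ∀ p ∈ polarCoord.target,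
      polarCoord.symm p ∈ (univ ×ˢ Ioi 0 : Set (ℝ × ℝ)) ↔
        p ∈ (Ioi (0 : ℝ) ×ˢ Ioo 0 Real.pi : Set (ℝ × ℝ)) := by
    rintro ⟨r, θ⟩ ⟨hr, hθ₁, hθ₂⟩
    simp only [mem_Ioi] at hr hθ₁ hθ₂
    simp only [polarCoord_symm_apply, mem_prod, mem_univ, true_and, mem_Ioi, mem_Ioo, hr, hθ₂,
      and_true, mul_pos_iff_of_pos_left]
    refine ⟨fun h => not_le.1 fun hθ => h.not_ge ?_, fun h => Real.sin_pos_of_pos_of_lt_pi h hθ₂⟩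
    exact Real.sin_nonpos_of_nonpos_of_neg_pi_le hθ hθ₁.le
  have h_subset : (Ioi (0 : ℝ) ×ˢ Ioo 0 Real.pi : Set (ℝ × ℝ)) ⊆ polarCoord.target :=
    prod_mono_right (Ioo_subset_Ioo_left (neg_nonpos.2 Real.pi_nonneg))
  calc ∫⁻ p in univ ×ˢ Ioi 0, f p
      = ∫⁻ p in polarCoord.target,
          ENNReal.ofReal p.1 * (univ ×ˢ Ioi 0).indicator f (polarCoord.symm p) := by
        rw [← lintegral_indicator (MeasurableSet.univ.prod measurableSet_Ioi),
          ← lintegral_comp_polarCoord_symm]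
        rfl
    _ = ∫⁻ p in polarCoord.target, (Ioi (0 : ℝ) ×ˢ Ioo 0 Real.pi).indicator
          (fun p => ENNReal.ofReal p.1 * f (polarCoord.symm p)) p := by
        refine setLIntegral_congr_fun polarCoord.open_target.measurableSet fun p hp => ?_
        by_cases h : p ∈ Ioi (0 : ℝ) ×ˢ Ioo 0 Real.pi
        · rw [indicator_of_mem h, indicator_of_mem ((h_upper p hp).2 h)]
        · rw [indicator_of_notMem h, indicator_of_notMem (mt (h_upper p hp).1 h), mul_zero]
    _ = _ := by
        rw [setLIntegral_indicator (measurableSet_Ioi.prod measurableSet_Ioo),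
          inter_eq_left.2 h_subset]
        rfl

section Rotation

variable {𝕜 E E' : Type*} [RCLike 𝕜] [NormedAddCommGroup E] [InnerProductSpace 𝕜 E]
  [FiniteDimensional 𝕜 E] [NormedAddCommGroup E'] [InnerProductSpace 𝕜 E']
  [FiniteDimensional 𝕜 E']

theorem exists_orthonormalBasis_apply_eq {ι : Type*} [Fintype ι] (hι : finrank 𝕜 E = Fintype.card ι)
    (i : ι) {u : E} (hu : ‖u‖ = 1) : ∃ B : OrthonormalBasis ι 𝕜 E, B i = u := by
  obtain ⟨B, hB⟩ := Orthonormal.exists_orthonormalBasis_extension_of_card_eq hι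
    (v := fun _ => u) (s := {i}) ⟨fun _ => hu, fun _ _ h => (h (Subsingleton.elim _ _)).elim⟩
  exact ⟨B, hB i rfl⟩

theorem exists_linearIsometryEquiv_apply_eq (h : finrank 𝕜 E = finrank 𝕜 E') {u : E} {v : E'}
    (hu : ‖u‖ = 1) (hv : ‖v‖ = 1) : ∃ φ : E ≃ₗᵢ[𝕜] E', φ u = v := by
  have : Nontrivial E := ⟨u, 0, by rintro rfl; simp at hu⟩
  have i : Fin (finrank 𝕜 E) := ⟨0, finrank_pos⟩
  obtain ⟨B, hB⟩ := exists_orthonormalBasis_apply_eq (𝕜 := 𝕜) (by simp) i hu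
  obtain ⟨B', hB'⟩ := exists_orthonormalBasis_apply_eq (𝕜 := 𝕜) (by simp [h]) i hv
  exact ⟨B.repr.trans B'.repr.symm, by simp [← hB, ← hB']⟩

end Rotation

section Zonal

variable {E : Type*} [NormedAddCommGroup E] [InnerProductSpace ℝ E] [FiniteDimensional ℝ E]
  [MeasurableSpace E] [BorelSpace E] {k : ℕ} {e : E}

theorem lintegral_inner_norm_eq_halfPlane (hE : finrank ℝ E = k + 2) (he : ‖e‖ = 1)
    {G : ℝ × ℝ → ℝ≥0∞} (hG : Measurable G) :
    ∫⁻ y : E, G (⟪e, y⟫_ℝ, ‖y‖) =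
      (volume : Measure (EuclideanSpace ℝ (Fin (k + 1)))).toSphere univ *
        ∫⁻ p in univ ×ˢ Ioi (0 : ℝ), ENNReal.ofReal (p.2 ^ k) * G (p.1, √(p.1 ^ 2 + p.2 ^ 2)) := by
  set E' := EuclideanSpace ℝ (Fin (k + 1))
  have h_finrank : finrank ℝ (WithLp 2 (ℝ × E')) = k + 2 := by
    rw [(WithLp.linearEquiv 2 ℝ (ℝ × E')).finrank_eq, finrank_prod, finrank_self,
      finrank_euclideanSpace_fin]
    ring
  obtain ⟨φ, hφ⟩ := exists_linearIsometryEquiv_apply_eq (𝕜 := ℝ) (E := WithLp 2 (ℝ × E')) (E' := E)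
    (u := WithLp.toLp 2 (1, 0)) (h_finrank.trans hE.symm) (by simp) he
  have h_inner : ∀ p : ℝ × E', ⟪e, φ (WithLp.toLp 2 p)⟫_ℝ = p.1 := fun p => by
    rw [← hφ, φ.inner_map_map, WithLp.prod_inner_apply]
    simp
  have h_norm : ∀ p : ℝ × E', ‖φ (WithLp.toLp 2 p)‖ = √(p.1 ^ 2 + ‖p.2‖ ^ 2) := fun p => by
    rw [φ.norm_map, WithLp.prod_norm_eq_of_L2]
    simp
  calc ∫⁻ y : E, G (⟪e, y⟫_ℝ, ‖y‖)
      = ∫⁻ p : ℝ × E', G (p.1, √(p.1 ^ 2 + ‖p.2‖ ^ 2)) := by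
        rw [← φ.measurePreserving.lintegral_comp (by fun_prop),
          ← (WithLp.volume_preserving_toLp ℝ E').lintegral_comp (by fun_prop)]
        simp only [h_inner, h_norm]
    _ = ∫⁻ t : ℝ, ∫⁻ z : E', G (t, √(t ^ 2 + ‖z‖ ^ 2)) := by
        rw [Measure.volume_eq_prod, lintegral_prod _ (by fun_prop)]
    _ = ∫⁻ t : ℝ, volume.toSphere (univ : Set (sphere (0 : E') 1)) * ∫⁻ s in Ioi (0 : ℝ),
          ENNReal.ofReal (s ^ k) * G (t, √(t ^ 2 + s ^ 2)) := by
        refine lintegral_congr fun t => ?_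
        rw [lintegral_comp_norm_addHaar volume (f := fun s => G (t, √(t ^ 2 + s ^ 2)))
          (by fun_prop), finrank_euclideanSpace_fin, Nat.add_sub_cancel]
    _ = _ := by
        rw [lintegral_const_mul _ (by fun_prop), Measure.volume_eq_prod,
          setLIntegral_prod _ (by fun_prop), Measure.restrict_univ]

theorem lintegral_inner_norm_eq_polar (hE : finrank ℝ E = k + 2) (he : ‖e‖ = 1)
    {G : ℝ × ℝ → ℝ≥0∞} (hG : Measurable G) :
    ∫⁻ y : E, G (⟪e, y⟫_ℝ, ‖y‖) =
      (volume : Measure (EuclideanSpace ℝ (Fin (k + 1)))).toSphere univ *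
        ∫⁻ θ in Ioo 0 Real.pi, ENNReal.ofReal (Real.sin θ ^ k) *
          ∫⁻ r in Ioi (0 : ℝ), ENNReal.ofReal (r ^ (k + 1)) * G (r * Real.cos θ, r) := by
  rw [lintegral_inner_norm_eq_halfPlane hE he hG, setLIntegral_upperHalfPlane_eq_polar,
    Measure.volume_eq_prod, setLIntegral_prod_symm _ (by fun_prop)]
  congr 1
  refine setLIntegral_congr_fun measurableSet_Ioo fun θ hθ => ?_
  have hsin := Real.sin_pos_of_mem_Ioo hθ
  rw [← lintegral_const_mul _ (by fun_prop)]
  refine setLIntegral_congr_fun measurableSet_Ioi fun r (hr : 0 < r) => ?_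
  have h_norm : √((r * Real.cos θ) ^ 2 + (r * Real.sin θ) ^ 2) = r := by
    rw [mul_pow, mul_pow, ← mul_add, Real.cos_sq_add_sin_sq, mul_one, Real.sqrt_sq hr.le]
  simp only [h_norm, ← mul_assoc]
  rw [← ENNReal.ofReal_mul hr.le, ← ENNReal.ofReal_mul (by positivity)]
  congr 2
  ring

theorem exists_measurable_lintegral_Ioi_pow_mul_eq_one (k : ℕ) :
    ∃ w : ℝ → ℝ≥0∞, Measurable w ∧ ∫⁻ r in Ioi (0 : ℝ), ENNReal.ofReal (r ^ k) * w r = 1 := by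
  refine ⟨(Ioo 0 1).indicator fun r => (ENNReal.ofReal (r ^ k))⁻¹,
    Measurable.indicator (by fun_prop) measurableSet_Ioo, ?_⟩
  calc ∫⁻ r in Ioi (0 : ℝ), ENNReal.ofReal (r ^ k) *
        (Ioo 0 1).indicator (fun r => (ENNReal.ofReal (r ^ k))⁻¹) r
      = ∫⁻ r in Ioi (0 : ℝ), (Ioo 0 1).indicator 1 r := by
        refine setLIntegral_congr_fun measurableSet_Ioi fun r (hr : 0 < r) => ?_
        by_cases h : r ∈ Ioo (0 : ℝ) 1
        · have h_pos : ENNReal.ofReal (r ^ k) ≠ 0 := (ENNReal.ofReal_pos.2 (by positivity)).ne'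
          simp only [indicator_of_mem h, ENNReal.mul_inv_cancel h_pos ENNReal.ofReal_ne_top,
            Pi.one_apply]
        · simp only [indicator_of_notMem h, mul_zero]
    _ = 1 := by
        rw [setLIntegral_indicator measurableSet_Ioo, inter_eq_left.2 Ioo_subset_Ioi_self]
        simp

theorem lintegral_toSphere_comp_inner (hE : finrank ℝ E = k + 2) (he : ‖e‖ = 1)
    {f : ℝ → ℝ≥0∞} (hf : Measurable f) :
    ∫⁻ ω : sphere (0 : E) 1, f ⟪e, (ω : E)⟫_ℝ ∂(volume : Measure E).toSphere =
      (volume : Measure (EuclideanSpace ℝ (Fin (k + 1)))).toSphere univ *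
        ∫⁻ θ in Ioo 0 Real.pi, ENNReal.ofReal (Real.sin θ ^ k) * f (Real.cos θ) := by
  have : Nontrivial E := nontrivial_of_finrank_pos (R := ℝ) (by omega)
  obtain ⟨w, hw, hw_one⟩ := exists_measurable_lintegral_Ioi_pow_mul_eq_one (k + 1)
  have h_radial : ∀ (c : ℝ≥0∞) (g : ℝ → ℝ≥0∞), (∀ r, 0 < r → g r = w r * c) →
      ∫⁻ r in Ioi (0 : ℝ), ENNReal.ofReal (r ^ (k + 1)) * g r = c := fun c g hg => by
    rw [setLIntegral_congr_fun measurableSet_Ioi fun r hr => by rw [hg r hr, ← mul_assoc],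
      lintegral_mul_const _ (by fun_prop), hw_one, one_mul]
  calc ∫⁻ ω : sphere (0 : E) 1, f ⟪e, (ω : E)⟫_ℝ ∂(volume : Measure E).toSphere
      = ∫⁻ y : E, w ‖y‖ * f (⟪e, y⟫_ℝ / ‖y‖) := by
        rw [lintegral_addHaar_eq_lintegral_toSphere_Ioi volume (by fun_prop), hE]
        refine lintegral_congr fun ω => (h_radial _ _ fun r hr => ?_).symm
        rw [norm_smul, norm_eq_of_mem_sphere, mul_one, Real.norm_of_nonneg hr.le,
          real_inner_smul_right, mul_div_cancel_left₀ _ hr.ne']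
    _ = _ := by
        rw [lintegral_inner_norm_eq_polar hE he (G := fun p => w p.2 * f (p.1 / p.2))
          (by fun_prop)]
        congr 1
        refine lintegral_congr fun θ => congrArg _ (h_radial _ _ fun r hr => ?_)
        rw [mul_div_cancel_left₀ _ hr.ne']

end Zonal

section SideLength

/-- The third side of a triangle with two sides `r` and `ρ` enclosing the angle `π - θ`, by the law
of cosines. It is the norm of `x + ρ • ω` when `‖x‖ = r`, `‖ω‖ = 1` and `θ` is the angle between
`x` and `ω`. -/
noncomputable def sideLength (r ρ θ : ℝ) : ℝ := √(r ^ 2 + ρ ^ 2 + 2 * r * ρ * Real.cos θ)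

/-- John's kernel `h(λ, ρ, r)` in dimension `n`, without its constant factor. It is meant for
`|ρ - r| ≤ lam ≤ ρ + r`, where both bases are nonnegative; at an endpoint with `n = 2`, where the
kernel is singular, `Real.rpow` gives the value `0`. -/
noncomputable def johnKernel (n : ℕ) (lam ρ r : ℝ) : ℝ :=
  (lam ^ 2 - (ρ - r) ^ 2) ^ (((n : ℝ) - 3) / 2) * ((ρ + r) ^ 2 - lam ^ 2) ^ (((n : ℝ) - 3) / 2)

@[fun_prop]
theorem measurable_johnKernel (n : ℕ) (ρ r : ℝ) : Measurable fun lam => johnKernel n lam ρ r := by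
  unfold johnKernel
  fun_prop

variable {r ρ θ : ℝ}

theorem norm_add_smul_eq_sqrt_inner {E : Type*} [NormedAddCommGroup E] [InnerProductSpace ℝ E]
    {x ω : E} (hx : x ≠ 0) (hω : ‖ω‖ = 1) (ρ : ℝ) :
    ‖x + ρ • ω‖ = √(‖x‖ ^ 2 + ρ ^ 2 + 2 * ‖x‖ * ρ * ⟪‖x‖⁻¹ • x, ω⟫_ℝ) := by
  have hx' : ‖x‖ ≠ 0 := norm_ne_zero_iff.2 hx
  rw [← Real.sqrt_sq (norm_nonneg (x + ρ • ω)), norm_add_sq_real, norm_smul, hω,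
    real_inner_smul_right, real_inner_smul_left, Real.norm_eq_abs, mul_one, sq_abs]
  congr 1
  field_simp
  ring

theorem sideLength_zero (hr : 0 ≤ r) (hρ : 0 ≤ ρ) : sideLength r ρ 0 = ρ + r := by
  rw [sideLength, Real.cos_zero, ← Real.sqrt_sq (add_nonneg hρ hr)]
  ring_nf

theorem sideLength_pi : sideLength r ρ Real.pi = |ρ - r| := by
  rw [sideLength, Real.cos_pi, ← Real.sqrt_sq_eq_abs]
  ring_nf

theorem sideLength_sq (r ρ θ : ℝ) :
    sideLength r ρ θ ^ 2 = r ^ 2 + ρ ^ 2 + 2 * r * ρ * Real.cos θ := by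
  refine Real.sq_sqrt ?_
  nlinarith [sq_nonneg (r + ρ * Real.cos θ), Real.sin_sq_add_cos_sq θ, sq_nonneg (ρ * Real.sin θ)]

theorem strictAntiOn_sideLength (hr : 0 < r) (hρ : 0 < ρ) :
    StrictAntiOn (sideLength r ρ) (Icc 0 Real.pi) := fun α hα β hβ hαβ => by
  have h_cos := Real.strictAntiOn_cos hα hβ hαβ
  refine lt_of_pow_lt_pow_left₀ 2 (Real.sqrt_nonneg _) ?_
  rw [sideLength_sq, sideLength_sq]
  gcongr

theorem image_sideLength_Ioo (hr : 0 < r) (hρ : 0 < ρ) :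
    sideLength r ρ '' Ioo 0 Real.pi = Ioo |ρ - r| (ρ + r) := by
  rw [ContinuousOn.image_Ioo_of_strictAntiOn Real.pi_nonneg
    (by unfold sideLength; fun_prop) (strictAntiOn_sideLength hr hρ), sideLength_pi,
    sideLength_zero hr.le hρ.le]

theorem sideLength_pos (hr : 0 < r) (hρ : 0 < ρ) (hθ : θ ∈ Ioo 0 Real.pi) :
    0 < sideLength r ρ θ :=
  (abs_nonneg _).trans_lt (image_sideLength_Ioo hr hρ ▸ mem_image_of_mem _ hθ).1

theorem hasDerivAt_sideLength (hr : 0 < r) (hρ : 0 < ρ) (hθ : θ ∈ Ioo 0 Real.pi) :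
    HasDerivAt (sideLength r ρ) (-(r * ρ * Real.sin θ) / sideLength r ρ θ) θ := by
  have h_ne : r ^ 2 + ρ ^ 2 + 2 * r * ρ * Real.cos θ ≠ 0 :=
    (Real.sqrt_pos.1 (sideLength_pos hr hρ hθ)).ne'
  convert! (((Real.hasDerivAt_cos θ).const_mul (2 * r * ρ)).const_add (r ^ 2 + ρ ^ 2)).sqrt h_ne
    using 1
  have h_side := sideLength_pos hr hρ hθ
  rw [sideLength] at h_side ⊢
  field_simp

theorem sideLength_sq_sub_mul_sub_sideLength_sq (r ρ θ : ℝ) :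
    (sideLength r ρ θ ^ 2 - (ρ - r) ^ 2) * ((ρ + r) ^ 2 - sideLength r ρ θ ^ 2) =
      (2 * (r * ρ) * Real.sin θ) ^ 2 := by
  rw [sideLength_sq]
  linear_combination -4 * r ^ 2 * ρ ^ 2 * Real.sin_sq_add_cos_sq θ

theorem sq_mem_Icc_sq_of_mem_Icc_abs {a b c : ℝ} (hc : c ∈ Icc |a| b) :
    c ^ 2 ∈ Icc (a ^ 2) (b ^ 2) :=
  ⟨sq_abs a ▸ pow_le_pow_left₀ (abs_nonneg a) hc.1 2,
    pow_le_pow_left₀ ((abs_nonneg a).trans hc.1) hc.2 2⟩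

theorem johnKernel_nonneg (n : ℕ) {lam : ℝ} (hlam : lam ∈ Icc |ρ - r| (ρ + r)) :
    0 ≤ johnKernel n lam ρ r :=
  have h_sq := sq_mem_Icc_sq_of_mem_Icc_abs hlam
  mul_nonneg (Real.rpow_nonneg (sub_nonneg.2 h_sq.1) _) (Real.rpow_nonneg (sub_nonneg.2 h_sq.2) _)

theorem johnKernel_sideLength (k : ℕ) (hr : 0 < r) (hρ : 0 < ρ) (hθ : θ ∈ Ioo 0 Real.pi) :
    johnKernel (k + 2) (sideLength r ρ θ) ρ r =
      (2 * (r * ρ) * Real.sin θ) ^ k / (2 * (r * ρ) * Real.sin θ) := by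
  have h_sin := Real.sin_pos_of_mem_Ioo hθ
  have h_mem : sideLength r ρ θ ∈ Ioo |ρ - r| (ρ + r) :=
    image_sideLength_Ioo hr hρ ▸ mem_image_of_mem _ hθ
  have h_sq := sq_mem_Icc_sq_of_mem_Icc_abs (Ioo_subset_Icc_self h_mem)
  rw [johnKernel, ← Real.mul_rpow (sub_nonneg.2 h_sq.1) (sub_nonneg.2 h_sq.2),
    sideLength_sq_sub_mul_sub_sideLength_sq, ← Real.rpow_natCast _ 2,
    ← Real.rpow_mul (by positivity), ← Real.rpow_natCast _ k, ← Real.rpow_sub_one (by positivity)]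
  congr 1
  push_cast
  ring

theorem abs_deriv_sideLength_mul_johnKernel (k : ℕ) (hr : 0 < r) (hρ : 0 < ρ)
    (hθ : θ ∈ Ioo 0 Real.pi) :
    |-(r * ρ * Real.sin θ) / sideLength r ρ θ| *
        (sideLength r ρ θ * johnKernel (k + 2) (sideLength r ρ θ) ρ r) =
      (2 * (r * ρ)) ^ k / 2 * Real.sin θ ^ k := by
  have h_sin := Real.sin_pos_of_mem_Ioo hθ
  have h_side := sideLength_pos hr hρ hθ
  rw [johnKernel_sideLength k hr hρ hθ, neg_div, abs_neg, abs_of_pos (by positivity)]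
  field_simp
  ring

theorem two_rpow_mul_rpow_eq (k : ℕ) {a : ℝ} (ha : 0 < a) :
    (2 : ℝ) ^ ((3 : ℝ) - (k + 2 : ℕ)) * a ^ ((2 : ℝ) - (k + 2 : ℕ)) = 2 / (2 * a) ^ k := by
  rw [show (3 : ℝ) - (k + 2 : ℕ) = 1 - k by push_cast; ring,
    show (2 : ℝ) - (k + 2 : ℕ) = -k by push_cast; ring, Real.rpow_sub two_pos, Real.rpow_one,
    Real.rpow_neg ha.le, Real.rpow_natCast, Real.rpow_natCast, mul_pow]
  field_simp

theorem intervalIntegrable_mul_johnKernel {n : ℕ} (hn : 2 ≤ n) (hr : 0 < r) (hρ : 0 < ρ) :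
    IntervalIntegrable (fun lam => lam * johnKernel n lam ρ r) volume |ρ - r| (ρ + r) := by
  obtain ⟨k, rfl⟩ := Nat.exists_eq_add_of_le' hn
  rw [intervalIntegrable_iff_integrableOn_Ioo_of_le (abs_le.2 ⟨by linarith, by linarith⟩),
    ← image_sideLength_Ioo hr hρ, integrableOn_image_iff_integrableOn_abs_deriv_smul
      measurableSet_Ioo (fun θ hθ => (hasDerivAt_sideLength hr hρ hθ).hasDerivWithinAt)
      ((strictAntiOn_sideLength hr hρ).injOn.mono Ioo_subset_Icc_self)]
  refine IntegrableOn.congr_fun (f := fun θ => (2 * (r * ρ)) ^ k / 2 * Real.sin θ ^ k) ?_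
    (fun θ hθ => (abs_deriv_sideLength_mul_johnKernel k hr hρ hθ).symm) measurableSet_Ioo
  exact (Continuous.integrableOn_Icc (by fun_prop)).mono_set Ioo_subset_Icc_self

theorem setLIntegral_sin_pow_mul_comp_sideLength (k : ℕ) (hr : 0 < r) (hρ : 0 < ρ)
    (f : ℝ → ℝ≥0∞) :
    ∫⁻ θ in Ioo 0 Real.pi, ENNReal.ofReal (Real.sin θ ^ k) * f (sideLength r ρ θ) =
      ∫⁻ lam in Ioo |ρ - r| (ρ + r),
        ENNReal.ofReal (2 / (2 * (r * ρ)) ^ k * (lam * johnKernel (k + 2) lam ρ r)) * f lam := by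
  rw [← image_sideLength_Ioo hr hρ, lintegral_image_eq_lintegral_abs_deriv_mul
    measurableSet_Ioo (fun θ hθ => (hasDerivAt_sideLength hr hρ hθ).hasDerivWithinAt)
    ((strictAntiOn_sideLength hr hρ).injOn.mono Ioo_subset_Icc_self)]
  refine setLIntegral_congr_fun measurableSet_Ioo fun θ hθ => ?_
  simp only [← mul_assoc (ENNReal.ofReal _)]
  rw [← ENNReal.ofReal_mul (abs_nonneg _), mul_left_comm,
    abs_deriv_sideLength_mul_johnKernel k hr hρ hθ]
  congr 2
  field_simp

end SideLength

section JohnIdentity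

variable {E F : Type*} [NormedAddCommGroup E] [InnerProductSpace ℝ E] [FiniteDimensional ℝ E]
  [MeasurableSpace E] [BorelSpace E] [NormedAddCommGroup F] [NormedSpace ℝ F]

theorem map_norm_add_smul_toSphere {k : ℕ} (hE : finrank ℝ E = k + 2) {x : E} (hx : x ≠ 0)
    {ρ : ℝ} (hρ : 0 < ρ) :
    (volume : Measure E).toSphere.map (fun ω : sphere (0 : E) 1 => ‖x + ρ • (ω : E)‖) =
      (volume : Measure (EuclideanSpace ℝ (Fin (k + 1)))).toSphere univ •
        (volume.restrict (Ioo |ρ - ‖x‖| (ρ + ‖x‖))).withDensity fun lam =>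
          ENNReal.ofReal (2 / (2 * (‖x‖ * ρ)) ^ k * (lam * johnKernel (k + 2) lam ρ ‖x‖)) := by
  have h_unit : ‖‖x‖⁻¹ • x‖ = 1 := norm_smul_inv_norm (𝕜 := ℝ) hx
  refine Measure.ext_of_lintegral _ fun f hf => ?_
  rw [lintegral_map hf (by fun_prop), lintegral_smul_measure,
    lintegral_withDensity_eq_lintegral_mul _ (by fun_prop) hf, smul_eq_mul]
  simp only [norm_add_smul_eq_sqrt_inner hx (norm_eq_of_mem_sphere _)]
  rw [lintegral_toSphere_comp_inner hE h_unit
    (f := fun t => f √(‖x‖ ^ 2 + ρ ^ 2 + 2 * ‖x‖ * ρ * t)) (by fun_prop)]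
  exact congrArg _ (setLIntegral_sin_pow_mul_comp_sideLength k (norm_pos_iff.2 hx) hρ f)

theorem john_spherical_means_identity_general {n : ℕ} (hn : 2 ≤ n) (hE : finrank ℝ E = n)
    {x : E} (hx : x ≠ 0) {ρ : ℝ} (hρ : 0 < ρ) {b : ℝ → F}
    (hb : IntervalIntegrable (fun lam => (lam * johnKernel n lam ρ ‖x‖) • b lam) volume
      |ρ - ‖x‖| (ρ + ‖x‖)) :
    ∫ ω : sphere (0 : E) 1, b ‖x + ρ • (ω : E)‖ ∂(volume : Measure E).toSphere =
      ((2 : ℝ) ^ ((3 : ℝ) - n) *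
        (volume : Measure (EuclideanSpace ℝ (Fin (n - 1)))).toSphere.real univ *
        (‖x‖ * ρ) ^ ((2 : ℝ) - n)) •
        ∫ lam in |ρ - ‖x‖|..(ρ + ‖x‖), (lam * johnKernel n lam ρ ‖x‖) • b lam := by
  obtain ⟨k, rfl⟩ := Nat.exists_eq_add_of_le' hn
  have hr : 0 < ‖x‖ := norm_pos_iff.2 hx
  have h_le : |ρ - ‖x‖| ≤ ρ + ‖x‖ := abs_le.2 ⟨by linarith, by linarith⟩
  set d : ℝ → ℝ := fun lam => 2 / (2 * (‖x‖ * ρ)) ^ k * (lam * johnKernel (k + 2) lam ρ ‖x‖)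
  have h_toReal : EqOn (fun lam => (ENNReal.ofReal (d lam)).toReal • b lam)
      (fun lam => (2 / (2 * (‖x‖ * ρ)) ^ k) • (lam * johnKernel (k + 2) lam ρ ‖x‖) • b lam)
      (Ioo |ρ - ‖x‖| (ρ + ‖x‖)) := fun lam hlam => by
    have h_kernel := johnKernel_nonneg (k + 2) (Ioo_subset_Icc_self hlam)
    have h_lam := (abs_nonneg _).trans hlam.1.le
    simp only [d]
    rw [ENNReal.toReal_ofReal (by positivity), mul_smul]
  have h_measurable : Measurable fun lam => ENNReal.ofReal (d lam) := by fun_prop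
  have h_map := map_norm_add_smul_toSphere hE hx hρ
  have h_integrable : Integrable b ((volume : Measure E).toSphere.map
      (fun ω : sphere (0 : E) 1 => ‖x + ρ • (ω : E)‖)) := by
    rw [h_map]
    refine Integrable.smul_measure ?_ (measure_ne_top _ _)
    rw [integrable_withDensity_iff_integrable_smul' h_measurable
      (.of_forall fun _ => ENNReal.ofReal_lt_top)]
    rw [intervalIntegrable_iff_integrableOn_Ioo_of_le h_le] at hb
    exact IntegrableOn.congr_fun (hb.smul _) h_toReal.symm measurableSet_Ioo
  rw [← integral_map (by fun_prop) h_integrable.aestronglyMeasurable, h_map,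
    integral_smul_measure, integral_withDensity_eq_integral_toReal_smul h_measurable
      (.of_forall fun _ => ENNReal.ofReal_lt_top), setIntegral_congr_fun measurableSet_Ioo h_toReal,
    integral_smul, smul_smul, intervalIntegral.integral_of_le h_le, integral_Ioc_eq_integral_Ioo,
    mul_right_comm, two_rpow_mul_rpow_eq k (by positivity), mul_comm]
  rfl

end JohnIdentity

end

/-- John's fundamental identity for spherical means. -/
theorem john_spherical_means_identity (n : ℕ) (hn : 2 ≤ n)
    (b : ℝ → ℝ) (hb : ContinuousOn b (Set.Ici 0))
    (x : EuclideanSpace ℝ (Fin n)) (hx : 0 < ‖x‖) (ρ : ℝ) (hρ : 0 < ρ) :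
    (∫ ω : sphere (0 : EuclideanSpace ℝ (Fin n)) 1,
        b ‖x + ρ • (ω : EuclideanSpace ℝ (Fin n))‖
        ∂(Measure.toSphere (volume : Measure (EuclideanSpace ℝ (Fin n)))))
      = (2 : ℝ) ^ ((3 : ℝ) - n) *
        ((Measure.toSphere (volume : Measure (EuclideanSpace ℝ (Fin (n - 1)))))
            Set.univ).toReal *
        (‖x‖ * ρ) ^ ((2 : ℝ) - n) *
        ∫ lam in (|ρ - ‖x‖|)..(ρ + ‖x‖),
          lam * b lam *
            ((lam ^ 2 - (ρ - ‖x‖) ^ 2) ^ (((n : ℝ) - 3) / 2) *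
              ((ρ + ‖x‖) ^ 2 - lam ^ 2) ^ (((n : ℝ) - 3) / 2)) := by
  have h_continuous : ContinuousOn b (Set.uIcc |ρ - ‖x‖| (ρ + ‖x‖)) :=
    hb.mono fun lam hlam => (le_inf (abs_nonneg _) (by positivity)).trans hlam.1
  have h_general := john_spherical_means_identity_general hn finrank_euclideanSpace_fin
    (norm_pos_iff.1 hx) hρ ((intervalIntegrable_mul_johnKernel hn hx hρ).smul_continuousOn
      h_continuous)
  simpa only [smul_eq_mul, johnKernel, mul_right_comm, Measure.real] using h_general
end
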